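/- arXiv:2111.12850 — 3 statements merged into one kernel-verified Lean document; each statement's English description precedes it below -/
import Mathlib

section
/- Let T_{k,p}(n) denote the expected number of random k-Naples parking functions on n cars. Then for n ≥ 1, T_{k,p}(n) = Σ_{i=0}^{n-1} C(n−1, i) · T_{k,p}(i) · (n−i)^{n−i−2} · (i + 1 + p·min{k, n−i−1}), with T_{k,p}(0) = 1. -/
/-- The first spot in the list `l` not in `occ`, if any. -/
def firstFree (occ : Finset ℕ) (l : List ℕ) : Option ℕ :=
  l.find? (fun s => decide (s ∉ occ))

/-- Run a parking simulation: each car is a pair (preference, coin); `step`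
decides where a car parks (or `none` if it fails). Returns `true` iff all cars park. -/
def runPark (step : Finset ℕ → ℕ → Bool → Option ℕ) :
    List (ℕ × Bool) → Finset ℕ → Bool
  | [], _ => true
  | (a, b) :: rest, occ =>
    match step occ a b with
    | none => false
    | some s => runPark step rest (insert s occ)

/-- Run a parking simulation, returning the final set of occupied spots
(cars that fail to park simply do not park). -/
def runOcc (step : Finset ℕ → ℕ → Bool → Option ℕ) :
    List (ℕ × Bool) → Finset ℕ → Finset ℕ
  | [], occ => occ
  | (a, b) :: rest, occ =>
    match step occ a b with
    | none => runOcc step rest occ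
    | some s => runOcc step rest (insert s occ)

/-- Random-direction step on spots `1,…,n`: if the preferred spot `a` is free, take it;
otherwise if the coin says forward, take the first free spot among `a+1,…,n`;
otherwise take the first free spot among `a-1,…,1`. -/
def dirStep (n : ℕ) (occ : Finset ℕ) (a : ℕ) (fwd : Bool) : Option ℕ :=
  if a ∉ occ then some a
  else if fwd then firstFree occ (List.range' (a + 1) (n - a))
  else firstFree occ ((List.range' 1 (a - 1)).reverse)

/-- Random `k`-Naples step on spots `1,…,n`: if the preferred spot `a` is free, take it;
otherwise, if the coin says to back up, check spots `a-1, a-2, …, max(a-k,1)` one by one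
taking the first free one; if none (or if the coin says not to back up), take the first
free spot among `a+1,…,n`. -/
def naplesStep (n k : ℕ) (occ : Finset ℕ) (a : ℕ) (back : Bool) : Option ℕ :=
  if a ∉ occ then some a
  else
    let fwd := firstFree occ (List.range' (a + 1) (n - a))
    if back then
      match firstFree occ ((List.range' (max (a - k) 1) (min k (a - 1))).reverse) with
      | some s => some s
      | none => fwd
    else fwd

/-- Circular random-direction step on spots `1,…,n+1` arranged in a circle:
if the preferred spot `a` is free, take it; otherwise search clockwise
(`a+1, a+2, …` wrapping around) or counterclockwise according to the coin. -/
def circStep (n : ℕ) (occ : Finset ℕ) (a : ℕ) (cw : Bool) : Option ℕ :=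
  if a ∉ occ then some a
  else if cw then
    firstFree occ (List.range' (a + 1) (n + 1 - a) ++ List.range' 1 (a - 1))
  else
    firstFree occ ((List.range' 1 (a - 1)).reverse ++ (List.range' (a + 1) (n + 1 - a)).reverse)

/-- Whether all `n` cars with preferences `α` park in the random-direction model on spots
`1,…,n` with coins `b` (`b i = true` means car `i` searches forward when its spot is taken). -/
def parksDir (n : ℕ) (α : Fin n → ℕ) (b : Fin n → Bool) : Bool :=
  runPark (dirStep n) (List.ofFn (fun i => (α i, b i))) ∅

/-- Whether all `n` cars with preferences `α` park in the `k`-Naples model on spots `1,…,n`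
with coins `b` (`b i = true` means car `i` backs up when its spot is taken). -/
def parksNaples (n k : ℕ) (α : Fin n → ℕ) (b : Fin n → Bool) : Bool :=
  runPark (naplesStep n k) (List.ofFn (fun i => (α i, b i))) ∅

/-- The probability that all cars park in the random-direction model, where each car
whose spot is taken independently searches forward with probability `p` and backward
with probability `1 - p`. -/
noncomputable def probDir (n : ℕ) (p : ℝ) (α : Fin n → ℕ) : ℝ :=
  ∑ b : Fin n → Bool,
    (∏ i, if b i then p else 1 - p) * (if parksDir n α b then 1 else 0)

/-- The probability that all cars park in the random `k`-Naples model, where each car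
whose spot is taken independently backs up (up to) `k` spots with probability `p`. -/
noncomputable def probNaples (n k : ℕ) (p : ℝ) (α : Fin n → ℕ) : ℝ :=
  ∑ b : Fin n → Bool,
    (∏ i, if b i then p else 1 - p) * (if parksNaples n k α b then 1 else 0)

/-- The deterministic 1-Naples simulation for choices `β = (β₂,…,βₙ) ∈ {0,1}^{n-1}`:
car `i ≥ 2` backs up one spot first iff `β i = false` (i.e. `βᵢ = 0`); car 1's choice
is irrelevant since its preferred spot is always free. -/
def parksUnder (n : ℕ) (α : Fin n → ℕ) (β : Fin (n - 1) → Bool) : Bool :=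
  parksNaples n 1 α
    (fun i => if h : 0 < i.1 then !(β ⟨i.1 - 1, by have := i.2; omega⟩) else false)

/-- `g α`: the number of choice sequences `β ∈ {0,1}^{n-1}` under which `α` parks in the
deterministic 1-Naples simulation. -/
def g (n : ℕ) (α : Fin n → ℕ) : ℕ :=
  (Finset.univ.filter (fun β : Fin (n - 1) → Bool => parksUnder n α β = true)).card

/-- `α` is a parking function: every car parks when each car whose preferred spot is taken
only searches forward. -/
def forwardParks (n : ℕ) (α : Fin n → ℕ) : Bool :=
  parksNaples n 0 α (fun _ => false)

/-- `α` is a 1-Naples parking function: every car parks when each car whose preferred spot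
is taken always backs up one spot first. -/
def naplesParks (n : ℕ) (α : Fin n → ℕ) : Bool :=
  parksNaples n 1 α (fun _ => true)

/-- The expected number of random `k`-Naples parking functions on `n` cars. -/
noncomputable def T (k : ℕ) (p : ℝ) (n : ℕ) : ℝ :=
  ∑ α : Fin n → Fin n, probNaples n k p (fun i => (α i).1 + 1)

/-- The staircase preference list: `m t` copies of `t`, then `m (t-1)` copies of `t-1`,
…, down to `m 2` copies of `2`. -/
def stair (t : ℕ) (m : ℕ → ℕ) : List ℕ :=
  ((List.range' 2 (t - 1)).reverse).flatMap (fun j => List.replicate (m j) j)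

/-- The staircase condition on a preference tuple: `α₁ = α₂`, each entry decreases by
`0` or `1`, and `αₙ = 2`. -/
def Staircase {n : ℕ} (hn : 2 ≤ n) (α : Fin n → ℕ) : Prop :=
  α ⟨0, by omega⟩ = α ⟨1, by omega⟩ ∧
  (∀ i : ℕ, (h : i + 1 < n) →
    α ⟨i + 1, h⟩ = α ⟨i, by omega⟩ ∨ α ⟨i + 1, h⟩ + 1 = α ⟨i, by omega⟩) ∧
  α ⟨n - 1, by omega⟩ = 2

/-- The number of 1-Naples parking functions on `n` cars. -/
def Nnum (n : ℕ) : ℕ :=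
  (Finset.univ.filter
    (fun α : Fin n → Fin n => naplesParks n (fun i => (α i).1 + 1) = true)).card
theorem ff_fwd (occ : Finset ℕ) (lo len x : ℕ) :
    firstFree occ (List.range' lo len) = some x ↔
      x ∉ occ ∧ lo ≤ x ∧ x < lo + len ∧ ∀ y, lo ≤ y → y < x → y ∈ occ := by
  unfold firstFree
  rw [List.find?_range'_eq_some]
  simp
  tauto

theorem ff_bwd (occ : Finset ℕ) (lo len x : ℕ) :
    firstFree occ (List.range' lo len).reverse = some x ↔
      x ∉ occ ∧ lo ≤ x ∧ x < lo + len ∧ ∀ y, x < y → y < lo + len → y ∈ occ := by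
  unfold firstFree
  induction len with
  | zero => simp; intros; omega
  | succ n ih =>
    rw [List.range'_1_concat, List.reverse_append, List.reverse_singleton, List.singleton_append,
      List.find?_cons]
    by_cases h : lo + n ∈ occ
    · simp only [h, not_true_eq_false, decide_false, ih]
      constructor
      · rintro ⟨h1, h2, h3, h4⟩
        refine ⟨h1, h2, by omega, fun y hy hy' => ?_⟩
        by_cases hyn : y = lo + n
        · rwa [hyn]
        · exact h4 y hy (by omega)
      · rintro ⟨h1, h2, h3, h4⟩
        refine ⟨h1, h2, ?_, fun y hy hy' => h4 y hy (by omega)⟩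
        by_contra hc
        have : x = lo + n := by omega
        exact h1 (this ▸ h)
    · simp only [h, not_false_eq_true, decide_true, Option.some.injEq]
      constructor
      · rintro rfl
        exact ⟨h, by omega, by omega, fun y _ _ => by omega⟩
      · rintro ⟨h1, h2, h3, h4⟩
        by_contra hc
        exact h (h4 _ (by omega) (by omega))

theorem ff_bwd_none (occ : Finset ℕ) (lo len : ℕ) :
    firstFree occ (List.range' lo len).reverse = none ↔
      ∀ y, lo ≤ y → y < lo + len → y ∈ occ := by
  unfold firstFree
  simp

/-- The condition that a car preferring `a` with coin `b` parks at the free spot `x`. -/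
def Goes (k : ℕ) (occ : Finset ℕ) (a : ℕ) (b : Bool) (x : ℕ) : Prop :=
  a = x ∨ (b = true ∧ x < a ∧ a ≤ x + k ∧ ∀ y, x < y → y ≤ a → y ∈ occ) ∨
    (a < x ∧ (∀ y, a ≤ y → y < x → y ∈ occ) ∧
      (b = true → ∀ y, 1 ≤ y → y < a → a ≤ y + k → y ∈ occ))

theorem step_iff (n k : ℕ) (occ : Finset ℕ) (a : ℕ) (b : Bool) (x : ℕ) (ha : 1 ≤ a)
    (han : a ≤ n) :
    naplesStep n k occ a b = some x ↔ (1 ≤ x ∧ x ≤ n ∧ x ∉ occ ∧ Goes k occ a b x) := by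
  unfold naplesStep Goes
  by_cases h : a ∈ occ
  · simp only [h, not_true_eq_false, if_false]
    have hF := ff_fwd occ (a + 1) (n - a) x
    cases b
    · simp only [Bool.false_eq_true, if_false, false_and, false_or, false_imp_iff, and_true, hF]
      constructor
      · rintro ⟨h1, h2, h3, h4⟩
        refine ⟨by omega, by omega, h1, Or.inr ⟨by omega, fun y hy hy' => ?_⟩⟩
        rcases Nat.eq_or_lt_of_le hy with rfl | hy
        · exact h
        · exact h4 y hy hy'
      · rintro ⟨h1, h2, h3, rfl | ⟨h4, h5⟩⟩
        · exact absurd h h3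
        · exact ⟨h3, by omega, by omega, fun y hy hy' => h5 y (by omega) hy'⟩
    · simp only [if_true, true_and, forall_const]
      have hB := ff_bwd occ (max (a - k) 1) (min k (a - 1))
      have hN := ff_bwd_none occ (max (a - k) 1) (min k (a - 1))
      cases hc : firstFree occ (List.range' (max (a - k) 1) (min k (a - 1))).reverse with
      | none =>
        simp only [hF]
        rw [hN] at hc
        constructor
        · rintro ⟨h1, h2, h3, h4⟩
          refine ⟨by omega, by omega, h1, Or.inr (Or.inr ⟨by omega, fun y hy hy' => ?_,
            fun y hy hy' hy'' => hc y (by omega) (by omega)⟩)⟩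
          rcases Nat.eq_or_lt_of_le hy with rfl | hy
          · exact h
          · exact h4 y hy hy'
        · rintro ⟨h1, h2, h3, rfl | ⟨h4, h5, h6⟩ | ⟨h4, h5, h6⟩⟩
          · exact absurd h h3
          · exact absurd (hc x (by omega) (by omega)) h3
          · exact ⟨h3, by omega, by omega, fun y hy hy' => h5 y (by omega) hy'⟩
      | some s =>
        rw [hB] at hc
        obtain ⟨c1, c2, c3, c4⟩ := hc
        simp only [Option.some.injEq]
        constructor
        · rintro rfl
          refine ⟨by omega, by omega, c1, Or.inr (Or.inl ⟨by omega, by omega, fun y hy hy' => ?_⟩)⟩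
          rcases Nat.eq_or_lt_of_le hy' with rfl | hy'
          · exact h
          · exact c4 y hy (by omega)
        · rintro ⟨h1, h2, h3, rfl | ⟨h4, h5, h6⟩ | ⟨h4, h5, h6⟩⟩
          · exact absurd h h3
          · rcases Nat.lt_trichotomy s x with hl | hl | hl
            · exact absurd (c4 x hl (by omega)) h3
            · exact hl
            · exact absurd (h6 s hl (by omega)) c1
          · exact absurd (h6 s (by omega) (by omega) (by omega)) c1
  · simp only [h, not_false_eq_true, if_true, Option.some.injEq]
    constructor
    · rintro rfl
      exact ⟨ha, han, h, Or.inl rfl⟩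
    · rintro ⟨h1, h2, h3, h4 | ⟨_, h4, h5, h6⟩ | ⟨h4, h5, h6⟩⟩
      · exact h4
      · exact absurd (h6 a h4 le_rfl) h
      · exact absurd (h5 a le_rfl h4) h

theorem Goes.mem {k : ℕ} {occ : Finset ℕ} {a : ℕ} {b : Bool} {x : ℕ} (h : Goes k occ a b x) :
    a ∈ insert x occ := by
  rcases h with rfl | ⟨_, h4, h5, h6⟩ | ⟨h4, h5, h6⟩
  · simp
  · exact Finset.mem_insert_of_mem (h6 a h4 le_rfl)
  · exact Finset.mem_insert_of_mem (h5 a le_rfl h4)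

open Classical in
/-- Weight of preference `a` leading to spot `x`. -/
noncomputable def gw (k : ℕ) (p : ℝ) (occ : Finset ℕ) (a x : ℕ) : ℝ :=
  ∑ b : Bool, (if b then p else 1 - p) * (if Goes k occ a b x then 1 else 0)

/-- Total weight of the ways for the next car to park at `x`. -/
noncomputable def sw (k : ℕ) (p : ℝ) (occ : Finset ℕ) (x : ℕ) : ℝ :=
  ∑ a ∈ insert x occ, gw k p occ a x

/-- Total weight of car sequences filling exactly the set `S`. -/
noncomputable def W (k : ℕ) (p : ℝ) : ℕ → Finset ℕ → ℝ
  | 0, S => if S = ∅ then 1 else 0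
  | c + 1, S => ∑ x ∈ S, W k p c (S.erase x) * sw k p (S.erase x) x

theorem gw_eq_zero {k : ℕ} {p : ℝ} {occ : Finset ℕ} {a x : ℕ} (h : a ∉ insert x occ) :
    gw k p occ a x = 0 := by
  unfold gw
  apply Finset.sum_eq_zero
  intro b _
  rw [if_neg (fun hg => h (Goes.mem hg)), mul_zero]

theorem sw_eq {k : ℕ} {p : ℝ} {occ U : Finset ℕ} {x : ℕ} (h : insert x occ ⊆ U) :
    sw k p occ x = ∑ a ∈ U, gw k p occ a x :=
  Finset.sum_subset h (fun _ _ ha => gw_eq_zero ha)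

theorem sw_left (k : ℕ) (p : ℝ) (s : ℕ) (A B : Finset ℕ) (hA : ∀ y ∈ A, y < s)
    (hB : ∀ y ∈ B, s < y) (x : ℕ) (hx : x < s) : sw k p (A ∪ B) x = sw k p A x := by
  have hs : s ∉ A ∪ B := by
    rw [Finset.mem_union]; rintro (h | h)
    · exact absurd (hA s h) (lt_irrefl _)
    · exact absurd (hB s h) (lt_irrefl _)
  have key : ∀ y, y < s → (y ∈ A ∪ B ↔ y ∈ A) := by
    intro y hy
    rw [Finset.mem_union]
    exact ⟨fun h => h.resolve_right (fun h' => by have := hB y h'; omega), Or.inl⟩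
  rw [sw_eq (Finset.Subset.refl _), sw_eq (U := insert x (A ∪ B))
    (Finset.insert_subset_insert _ Finset.subset_union_left)]
  apply Finset.sum_congr rfl
  intro a ha
  unfold gw
  apply Finset.sum_congr rfl
  intro b _
  congr 2
  apply propext
  by_cases has : a < s
  · unfold Goes
    refine or_congr Iff.rfl (or_congr ?_ ?_)
    · exact and_congr Iff.rfl (and_congr Iff.rfl (and_congr Iff.rfl
        (forall_congr' fun y => imp_congr_right fun h1 => imp_congr_right fun h2 =>
          key y (by omega))))
    · refine and_congr_right fun h0 => (and_congr
        (forall_congr' fun y => imp_congr_right fun h1 => imp_congr_right fun h2 =>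
          key y (by omega)) (imp_congr_right fun _ => forall_congr' fun y =>
          imp_congr_right fun _ => imp_congr_right fun h1 => imp_congr_right fun h2 =>
          key y (by omega)))
  · constructor
    · rintro (h | ⟨_, h4, h5, h6⟩ | ⟨h4, h5, h6⟩)
      · omega
      · exact absurd (h6 s (by omega) (by omega)) hs
      · omega
    · intro h
      have := Goes.mem h
      rw [Finset.mem_insert] at this
      rcases this with h | h
      · omega
      · exact absurd (hA a h) has

theorem sw_right (k : ℕ) (p : ℝ) (s : ℕ) (hs1 : 1 ≤ s) (A B : Finset ℕ) (hA : ∀ y ∈ A, y < s)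
    (hB : ∀ y ∈ B, s < y) (x : ℕ) (hx : s < x) : sw k p (A ∪ B) x = sw k p B x := by
  have hs : s ∉ A ∪ B := by
    rw [Finset.mem_union]; rintro (h | h)
    · exact absurd (hA s h) (lt_irrefl _)
    · exact absurd (hB s h) (lt_irrefl _)
  have hsB : s ∉ B := fun h => hs (Finset.mem_union_right _ h)
  have key : ∀ y, s < y → (y ∈ A ∪ B ↔ y ∈ B) := by
    intro y hy
    rw [Finset.mem_union]
    exact ⟨fun h => h.resolve_left (fun h' => by have := hA y h'; omega), Or.inr⟩
  rw [sw_eq (Finset.Subset.refl _), sw_eq (U := insert x (A ∪ B))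
    (Finset.insert_subset_insert _ Finset.subset_union_right)]
  apply Finset.sum_congr rfl
  intro a ha
  unfold gw
  apply Finset.sum_congr rfl
  intro b _
  congr 2
  apply propext
  by_cases has : s < a
  · unfold Goes
    refine or_congr Iff.rfl (or_congr ?_ ?_)
    · exact and_congr Iff.rfl (and_congr Iff.rfl (and_congr Iff.rfl
        (forall_congr' fun y => imp_congr_right fun h1 => imp_congr_right fun h2 =>
          key y (by omega))))
    · refine and_congr_right fun h0 => (and_congr
        (forall_congr' fun y => imp_congr_right fun h1 => imp_congr_right fun h2 =>
          key y (by omega)) (imp_congr_right fun _ => ?_))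
      constructor
      · intro h y h1 h2 h3
        by_cases hy : s < y
        · exact (key y hy).1 (h y h1 h2 h3)
        · exact absurd (h s hs1 has (by omega)) hs
      · intro h y h1 h2 h3
        exact Finset.mem_union_right _ (h y h1 h2 h3)
  · constructor
    · rintro (h | ⟨_, h4, h5, h6⟩ | ⟨h4, h5, h6⟩)
      · omega
      · omega
      · exact absurd (h5 s (by omega) (by omega)) hs
    · intro h
      have := Goes.mem h
      rw [Finset.mem_insert] at this
      rcases this with h | h
      · omega
      · exact absurd (hB a h) has

theorem W_union (k : ℕ) (p : ℝ) (s : ℕ) (hs1 : 1 ≤ s) : ∀ (c : ℕ) (A B : Finset ℕ),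
    A.card + B.card = c → (∀ y ∈ A, y < s) → (∀ y ∈ B, s < y) →
    W k p c (A ∪ B) = (Nat.choose c A.card : ℝ) * W k p A.card A * W k p B.card B := by
  intro c
  induction c with
  | zero =>
    intro A B h _ _
    have h1 : A = ∅ := Finset.card_eq_zero.1 (by omega)
    have h2 : B = ∅ := Finset.card_eq_zero.1 (by omega)
    subst h1 h2
    simp [W]
  | succ c ih =>
    intro A B h hA hB
    have hd : Disjoint A B := by
      rw [Finset.disjoint_left]
      intro y h1 h2
      have := hA y h1
      have := hB y h2
      omega
    rw [W, Finset.sum_union hd]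
    have e1 : ∑ x ∈ A, W k p c ((A ∪ B).erase x) * sw k p ((A ∪ B).erase x) x
        = ∑ x ∈ A, (Nat.choose c (A.card - 1) : ℝ) * W k p B.card B *
          (W k p (A.card - 1) (A.erase x) * sw k p (A.erase x) x) := by
      apply Finset.sum_congr rfl
      intro x hx
      have hxB : x ∉ B := fun h => Finset.disjoint_left.1 hd hx h
      have hA' : ∀ y ∈ A.erase x, y < s := fun y hy => hA y (Finset.mem_of_mem_erase hy)
      have hc := Finset.card_erase_of_mem hx
      have hpos := Finset.card_pos.2 ⟨x, hx⟩
      rw [Finset.erase_union_distrib, Finset.erase_eq_of_notMem hxB,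
        ih _ _ (by omega) hA' hB, sw_left k p s _ _ hA' hB x (hA x hx), hc]
      ring
    have e2 : ∑ x ∈ B, W k p c ((A ∪ B).erase x) * sw k p ((A ∪ B).erase x) x
        = ∑ x ∈ B, (Nat.choose c A.card : ℝ) * W k p A.card A *
          (W k p (B.card - 1) (B.erase x) * sw k p (B.erase x) x) := by
      apply Finset.sum_congr rfl
      intro x hx
      have hxA : x ∉ A := fun h => Finset.disjoint_left.1 hd h hx
      have hB' : ∀ y ∈ B.erase x, s < y := fun y hy => hB y (Finset.mem_of_mem_erase hy)
      have hc := Finset.card_erase_of_mem hx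
      have hpos := Finset.card_pos.2 ⟨x, hx⟩
      rw [Finset.erase_union_distrib, Finset.erase_eq_of_notMem hxA,
        ih _ _ (by omega) hA hB', sw_right k p s hs1 _ _ hA hB' x (hB x hx), hc]
      ring
    rw [e1, e2, ← Finset.mul_sum, ← Finset.mul_sum]
    rcases hAc : A.card with _ | a
    · have h1 : A = ∅ := Finset.card_eq_zero.1 hAc
      have hBc : B.card = c + 1 := by omega
      rw [h1, hBc]
      simp [W]
    · rcases hBc : B.card with _ | b
      · have h1 : B = ∅ := Finset.card_eq_zero.1 hBc
        have : a = c := by omega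
        subst this
        rw [h1]
        simp [W]
      · have : W k p (a + 1) A = ∑ x ∈ A, W k p a (A.erase x) * sw k p (A.erase x) x := rfl
        have h2 : W k p (b + 1) B = ∑ x ∈ B, W k p b (B.erase x) * sw k p (B.erase x) x := rfl
        simp only [Nat.add_sub_cancel]
        rw [← this, ← h2, Nat.choose_succ_succ]
        push_cast
        ring

theorem W_Ioc_rec (k : ℕ) (p : ℝ) (s m : ℕ) :
    W k p (m + 1) (Finset.Ioc s (s + (m + 1))) = ∑ j ∈ Finset.range (m + 1),
      (Nat.choose m j : ℝ) * W k p j (Finset.Ioc s (s + j)) *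
        W k p (m - j) (Finset.Ioc (s + j + 1) (s + j + 1 + (m - j))) *
        sw k p ((Finset.Ioc s (s + (m + 1))).erase (s + j + 1)) (s + j + 1) := by
  rw [W]
  symm
  apply Finset.sum_bij (fun j _ => s + j + 1)
  · intro j hj; simp at hj ⊢; omega
  · intro a _ b _ h; omega
  · intro x hx
    simp at hx
    exact ⟨x - s - 1, Finset.mem_range.2 (by omega), by omega⟩
  · intro j hj
    simp at hj
    congr 1
    have hu : (Finset.Ioc s (s + (m + 1))).erase (s + j + 1) =
        Finset.Ioc s (s + j) ∪ Finset.Ioc (s + j + 1) (s + j + 1 + (m - j)) := by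
      ext y; simp; omega
    rw [hu, W_union k p (s + j + 1) (by omega) m _ _ (by simp; omega)
      (by intro y; simp; try omega) (by intro y; simp; try omega)]
    simp

theorem gw_self (k : ℕ) (p : ℝ) (occ : Finset ℕ) (x : ℕ) : gw k p occ x x = 1 := by
  simp [gw, Goes]

theorem sum_gw_right (k : ℕ) (p : ℝ) (s m j : ℕ) (hj : j ≤ m) :
    ∑ a ∈ Finset.Ioc (s + j + 1) (s + (m + 1)),
      gw k p ((Finset.Ioc s (s + (m + 1))).erase (s + j + 1)) a (s + j + 1)
      = p * (min k (m - j) : ℕ) := by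
  have : ∀ a ∈ Finset.Ioc (s + j + 1) (s + (m + 1)),
      gw k p ((Finset.Ioc s (s + (m + 1))).erase (s + j + 1)) a (s + j + 1)
      = if a ≤ s + j + 1 + k then p else 0 := by
    intro a ha
    simp only [Finset.mem_Ioc] at ha
    have h1 : Goes k ((Finset.Ioc s (s + (m + 1))).erase (s + j + 1)) a true (s + j + 1) ↔
        a ≤ s + j + 1 + k := by
      unfold Goes
      simp only [Finset.mem_erase, Finset.mem_Ioc]
      constructor
      · rintro (h | h | h) <;> omega
      · intro h
        exact Or.inr (Or.inl ⟨trivial, by omega, h, fun y _ _ => by omega⟩)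
    have h2 : ¬ Goes k ((Finset.Ioc s (s + (m + 1))).erase (s + j + 1)) a false (s + j + 1) := by
      unfold Goes
      rintro (h | h | h)
      · omega
      · simp at h
      · omega
    simp [gw, h1, h2]
  rw [Finset.sum_congr rfl this, ← Finset.sum_filter, Finset.sum_const]
  have hf : (Finset.Ioc (s + j + 1) (s + (m + 1))).filter (fun a => a ≤ s + j + 1 + k) =
      Finset.Ioc (s + j + 1) (s + j + 1 + min k (m - j)) := by
    ext y; simp; omega
  rw [hf]
  simp [mul_comm]

theorem sum_gw_left (k : ℕ) (p : ℝ) (s m j : ℕ) (hj : j ≤ m) :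
    ∑ a ∈ Finset.Ioc s (s + j),
      gw k p ((Finset.Ioc s (s + (m + 1))).erase (s + j + 1)) a (s + j + 1)
      = j - (if s = 0 then 0 else p * (min k j : ℕ)) := by
  have : ∀ a ∈ Finset.Ioc s (s + j),
      gw k p ((Finset.Ioc s (s + (m + 1))).erase (s + j + 1)) a (s + j + 1)
      = 1 - if s ≠ 0 ∧ a ≤ s + k then p else 0 := by
    intro a ha
    simp only [Finset.mem_Ioc] at ha
    have h1 : Goes k ((Finset.Ioc s (s + (m + 1))).erase (s + j + 1)) a true (s + j + 1) ↔
        ¬ (s ≠ 0 ∧ a ≤ s + k) := by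
      unfold Goes
      simp only [Finset.mem_erase, Finset.mem_Ioc]
      constructor
      · rintro (h | h | ⟨h, h', h''⟩)
        · omega
        · omega
        · rintro ⟨h3, h4⟩
          have := h'' trivial s (by omega) (by omega) (by omega)
          omega
      · intro h
        exact Or.inr (Or.inr ⟨by omega, fun y _ _ => by omega, fun _ y _ _ _ => by omega⟩)
    have h2 : Goes k ((Finset.Ioc s (s + (m + 1))).erase (s + j + 1)) a false (s + j + 1) := by
      unfold Goes
      simp only [Finset.mem_erase, Finset.mem_Ioc]
      exact Or.inr (Or.inr ⟨by omega, fun y _ _ => by omega, fun h => by simp at h⟩)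
    simp only [gw, h1, h2, Fintype.sum_bool]
    by_cases h : s ≠ 0 ∧ a ≤ s + k
    · simp [h]
    · simp only [h, not_false_eq_true, if_true, if_false]
      simp
  rw [Finset.sum_congr rfl this, Finset.sum_sub_distrib, ← Finset.sum_filter, Finset.sum_const,
    Finset.sum_const]
  by_cases hs : s = 0
  · simp [hs]
  · have hf : (Finset.Ioc s (s + j)).filter (fun a => s ≠ 0 ∧ a ≤ s + k) =
        Finset.Ioc s (s + min k j) := by
      ext y; simp; omega
    rw [hf]
    simp [mul_comm, hs]

theorem sw_Ioc (k : ℕ) (p : ℝ) (s m j : ℕ) (hj : j ≤ m) :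
    sw k p ((Finset.Ioc s (s + (m + 1))).erase (s + j + 1)) (s + j + 1) =
      (j : ℝ) + 1 - (if s = 0 then 0 else p * (min k j : ℕ)) + p * (min k (m - j) : ℕ) := by
  unfold sw
  rw [Finset.insert_erase (by simp; omega)]
  have hu : Finset.Ioc s (s + (m + 1)) =
      insert (s + j + 1) (Finset.Ioc s (s + j) ∪ Finset.Ioc (s + j + 1) (s + (m + 1))) := by
    ext y; simp; omega
  have h1 := sum_gw_left k p s m j hj
  have h2 := sum_gw_right k p s m j hj
  generalize hO : (Finset.Ioc s (s + (m + 1))).erase (s + j + 1) = O at *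
  rw [hu, Finset.sum_insert (by simp), Finset.sum_union, h1, h2, gw_self]
  · ring
  · rw [Finset.disjoint_left]
    intro y; simp; omega

theorem alt_sum_zero (n : ℕ) :
    ∑ j ∈ Finset.range (n + 1 + 1), (-1 : ℝ) ^ (n + 1 - j) * (Nat.choose (n + 1) j : ℝ)
      * (1 + (j : ℝ)) ^ n = 0 := by
  have h := Polynomial.fwdDiff_iter_eq_zero_of_degree_lt (R := ℝ) (P := Polynomial.X ^ n)
    (n := n + 1) (by simp)
  have h2 := congrFun h 1
  rw [fwdDiff_iter_eq_sum_shift] at h2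
  simp at h2
  exact h2

theorem abel_aux (n : ℕ) : ∀ y : ℝ,
    ∑ j ∈ Finset.range (n + 1), (Nat.choose n j : ℝ) * (1 + (j : ℝ)) ^ (j - 1) *
      (y + n - j) ^ (n - j) = (1 + y + n) ^ n := by
  induction n with
  | zero => intro y; simp
  | succ n ih =>
    set L : ℝ → ℝ := fun y => ∑ j ∈ Finset.range (n + 1 + 1),
      (Nat.choose (n + 1) j : ℝ) * (1 + (j : ℝ)) ^ (j - 1) *
      (y + (n + 1 : ℕ) - j) ^ (n + 1 - j) - (1 + y + (n + 1 : ℕ)) ^ (n + 1) with hL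
    have hd : ∀ y, HasDerivAt L 0 y := by
      intro y
      have h1 : HasDerivAt L (∑ j ∈ Finset.range (n + 1 + 1),
          (Nat.choose (n + 1) j : ℝ) * (1 + (j : ℝ)) ^ (j - 1) *
          (((n + 1 - j : ℕ) : ℝ) * (y + (n + 1 : ℕ) - j) ^ (n + 1 - j - 1) * 1)
          - ((n + 1 : ℕ) : ℝ) * (1 + y + (n + 1 : ℕ)) ^ (n + 1 - 1) * 1) y := by
        apply HasDerivAt.sub
        · apply HasDerivAt.fun_sum
          intro j _
          apply HasDerivAt.const_mul
          apply HasDerivAt.fun_pow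
          exact ((hasDerivAt_id y).add_const _).sub_const _
        · apply HasDerivAt.fun_pow
          exact ((hasDerivAt_id y).const_add _).add_const _
      convert h1 using 1
      rw [Finset.sum_range_succ]
      have e := ih (y + 1)
      have e2 : ∑ j ∈ Finset.range (n + 1),
          (Nat.choose (n + 1) j : ℝ) * (1 + (j : ℝ)) ^ (j - 1) *
          (((n + 1 - j : ℕ) : ℝ) * (y + (n + 1 : ℕ) - j) ^ (n + 1 - j - 1) * 1)
          = ((n : ℝ) + 1) * (1 + (y + 1) + n) ^ n := by
        rw [← e, Finset.mul_sum]
        apply Finset.sum_congr rfl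
        intro j _
        have hc : (Nat.choose n j : ℝ) * ((n : ℝ) + 1) =
            (Nat.choose (n + 1) j : ℝ) * ((n + 1 - j : ℕ) : ℝ) := by
          exact_mod_cast Nat.choose_mul_succ_eq n j
        have h3 : n + 1 - j - 1 = n - j := by omega
        rw [h3]
        push_cast
        have h4 : y + ((n : ℝ) + 1) - j = y + 1 + n - j := by ring
        rw [h4]
        linear_combination (-(1 + (j : ℝ)) ^ (j - 1) * (y + 1 + n - j) ^ (n - j)) * hc
      rw [e2]
      simp
      ring
    have hz : L (-((n : ℝ) + 2)) = 0 := by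
      simp only [hL]
      have e : (1 + -((n : ℝ) + 2) + (n + 1 : ℕ)) = 0 := by push_cast; ring
      rw [e, zero_pow (by omega), sub_zero, ← alt_sum_zero n]
      apply Finset.sum_congr rfl
      intro j hj
      rw [Finset.mem_range] at hj
      have e1 : (-((n : ℝ) + 2) + (n + 1 : ℕ) - j) = (-1) * (1 + j) := by push_cast; ring
      rw [e1, mul_pow]
      rcases j with _ | j
      · simp
      · have : (1 + ((j + 1 : ℕ) : ℝ)) ^ n = (1 + ((j + 1 : ℕ) : ℝ)) ^ (j + 1 - 1) *
            (1 + ((j + 1 : ℕ) : ℝ)) ^ (n + 1 - (j + 1)) := by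
          rw [← pow_add]; congr 1; omega
        rw [this]; ring
    intro y
    have hc := is_const_of_deriv_eq_zero (f := L) (fun y => (hd y).differentiableAt)
      (fun y => (hd y).deriv) y (-((n : ℝ) + 2))
    rw [hz] at hc
    exact sub_eq_zero.1 hc

theorem W_block (k : ℕ) (p : ℝ) (m : ℕ) : ∀ s : ℕ, 1 ≤ s →
    W k p m (Finset.Ioc s (s + m)) = ((m : ℝ) + 1) ^ (m - 1) := by
  induction m using Nat.strong_induction_on with
  | _ m ih =>
  intro s hs
  rcases m with _ | m
  · simp [W]
  rw [W_Ioc_rec]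
  set f : ℕ → ℝ := fun m => ((m : ℝ) + 1) ^ (m - 1) with hf
  have h1 : ∀ j ∈ Finset.range (m + 1),
      (Nat.choose m j : ℝ) * W k p j (Finset.Ioc s (s + j)) *
        W k p (m - j) (Finset.Ioc (s + j + 1) (s + j + 1 + (m - j))) *
        sw k p ((Finset.Ioc s (s + (m + 1))).erase (s + j + 1)) (s + j + 1)
      = (Nat.choose m j : ℝ) * f j * f (m - j) * ((j : ℝ) + 1)
        + ((Nat.choose m j : ℝ) * f j * f (m - j) * (p * (min k (m - j) : ℕ))
        - (Nat.choose m j : ℝ) * f j * f (m - j) * (p * (min k j : ℕ))) := by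
    intro j hj
    rw [Finset.mem_range] at hj
    rw [ih j (by omega) s hs, ih (m - j) (by omega) (s + j + 1) (by omega),
      sw_Ioc k p s m j (by omega), if_neg (by omega)]
    simp only [hf]
    ring
  rw [Finset.sum_congr rfl h1, Finset.sum_add_distrib, Finset.sum_sub_distrib]
  have h2 : ∑ j ∈ Finset.range (m + 1),
      (Nat.choose m j : ℝ) * f j * f (m - j) * (p * (min k (m - j) : ℕ)) =
      ∑ j ∈ Finset.range (m + 1),
      (Nat.choose m j : ℝ) * f j * f (m - j) * (p * (min k j : ℕ)) := by
    rw [← Finset.sum_range_reflect]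
    apply Finset.sum_congr rfl
    intro j hj
    rw [Finset.mem_range] at hj
    have e1 : m + 1 - 1 - j = m - j := by omega
    have e2 : m - (m - j) = j := by omega
    rw [e1, e2, Nat.choose_symm (by omega)]
    ring
  rw [h2, sub_self, add_zero, ← Finset.sum_range_reflect]
  have h3 := abel_aux m 1
  have h4 : (((m + 1 : ℕ) : ℝ) + 1) ^ (m + 1 - 1) = (1 + 1 + (m : ℝ)) ^ m := by
    push_cast; congr 1; ring
  rw [h4, ← h3]
  apply Finset.sum_congr rfl
  intro j hj
  rw [Finset.mem_range] at hj
  have e1 : m + 1 - 1 - j = m - j := by omega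
  have e2 : m - (m - j) = j := by omega
  rw [e1, e2, Nat.choose_symm (by omega)]
  have e3 : f (m - j) * (((m - j : ℕ) : ℝ) + 1) = (1 + m - j) ^ (m - j) := by
    have : (1 + (m : ℝ) - j) = ((m - j : ℕ) : ℝ) + 1 := by
      rw [Nat.cast_sub (by omega)]; ring
    rw [this]
    simp only [hf]
    rcases (m - j) with _ | q
    · simp
    · simp [pow_succ]
  rw [← e3]
  simp only [hf]
  ring

/-- Weighted count of parking completions with `c` further cars. -/
noncomputable def G (n k : ℕ) (p : ℝ) (c : ℕ) (occ : Finset ℕ) : ℝ :=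
  ∑ α : Fin c → Fin n, ∑ b : Fin c → Bool, (∏ i, if b i then p else 1 - p) *
    (if runPark (naplesStep n k) (List.ofFn (fun i => ((α i).1 + 1, b i))) occ then 1 else 0)

theorem G_succ_aux (n k : ℕ) (p : ℝ) (c : ℕ) (occ : Finset ℕ) :
    G n k p (c + 1) occ = ∑ a : Fin n, ∑ b : Bool, (if b then p else 1 - p) *
      (match naplesStep n k occ (a.1 + 1) b with
        | none => 0
        | some s => G n k p c (insert s occ)) := by
  unfold G
  rw [← (Fin.consEquiv (fun _ : Fin (c + 1) => Fin n)).sum_comp, Fintype.sum_prod_type]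
  apply Finset.sum_congr rfl
  intro a _
  have : ∀ α : Fin c → Fin n, ∑ b : Fin (c + 1) → Bool, (∏ i, if b i then p else 1 - p) *
      (if runPark (naplesStep n k) (List.ofFn (fun i =>
        (((Fin.consEquiv (fun _ : Fin (c + 1) => Fin n)) (a, α) i).1 + 1, b i))) occ then (1 : ℝ)
        else 0) = ∑ b0 : Bool, (if b0 then p else 1 - p) *
      (match naplesStep n k occ (a.1 + 1) b0 with
        | none => 0
        | some s => ∑ b : Fin c → Bool, (∏ i, if b i then p else 1 - p) *
    (if runPark (naplesStep n k) (List.ofFn (fun i => ((α i).1 + 1, b i))) (insert s occ)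
      then (1 : ℝ) else 0)) := by
    intro α
    rw [← (Fin.consEquiv (fun _ : Fin (c + 1) => Bool)).sum_comp, Fintype.sum_prod_type]
    apply Finset.sum_congr rfl
    intro b0 _
    cases hs : naplesStep n k occ (a.1 + 1) b0 with
    | none =>
      simp only [mul_zero]
      apply Finset.sum_eq_zero
      intro b _
      simp [Fin.consEquiv, List.ofFn_succ, runPark, hs]
    | some s =>
      simp only
      rw [Finset.mul_sum]
      apply Finset.sum_congr rfl
      intro b _
      simp [Fin.consEquiv, List.ofFn_succ, runPark, hs, Fin.prod_univ_succ, mul_assoc]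
  rw [Finset.sum_congr rfl (fun α _ => this α), Finset.sum_comm]
  apply Finset.sum_congr rfl
  intro b0 _
  rw [← Finset.mul_sum]
  congr 1
  cases hs : naplesStep n k occ (a.1 + 1) b0 with
  | none => simp
  | some s => rfl

theorem G_succ (n k : ℕ) (p : ℝ) (c : ℕ) (occ : Finset ℕ) (hocc : occ ⊆ Finset.Ioc 0 n) :
    G n k p (c + 1) occ =
      ∑ x ∈ Finset.Ioc 0 n \ occ, sw k p occ x * G n k p c (insert x occ) := by
  classical
  have h1 : ∀ x ∈ Finset.Ioc 0 n \ occ, sw k p occ x * G n k p c (insert x occ) =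
      ∑ a : Fin n, ∑ b : Bool, (if b then p else 1 - p) *
        ((if Goes k occ (a.1 + 1) b x then 1 else 0) * G n k p c (insert x occ)) := by
    intro x hx
    rw [Finset.mem_sdiff] at hx
    rw [sw_eq (U := Finset.Ioc 0 n) (Finset.insert_subset hx.1 hocc)]
    have : ∑ a ∈ Finset.Ioc 0 n, gw k p occ a x = ∑ a : Fin n, gw k p occ (a.1 + 1) x := by
      rw [Fin.sum_univ_eq_sum_range (fun a => gw k p occ (a + 1) x) n]
      symm
      apply Finset.sum_bij (fun j _ => j + 1)
      · intro j hj; simp at hj ⊢; omega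
      · intro a _ b _ h; omega
      · intro x hx
        simp at hx
        exact ⟨x - 1, by simp; omega, by omega⟩
      · intro j _; rfl
    rw [this, Finset.sum_mul]
    apply Finset.sum_congr rfl
    intro a _
    rw [gw, Finset.sum_mul]
    apply Finset.sum_congr rfl
    intro b _
    rw [mul_assoc]
  rw [Finset.sum_congr rfl h1, G_succ_aux, Finset.sum_comm (s := Finset.Ioc 0 n \ occ)]
  apply Finset.sum_congr rfl
  intro a _
  rw [Finset.sum_comm (s := Finset.Ioc 0 n \ occ)]
  apply Finset.sum_congr rfl
  intro b _
  rw [← Finset.mul_sum]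
  congr 1
  have hstep := fun x => step_iff n k occ (a.1 + 1) b x (by omega) a.2
  have h2 : ∀ x ∈ Finset.Ioc 0 n \ occ,
      ((if Goes k occ (a.1 + 1) b x then (1 : ℝ) else 0) * G n k p c (insert x occ)) =
      if naplesStep n k occ (a.1 + 1) b = some x then G n k p c (insert x occ) else 0 := by
    intro x hx
    simp only [Finset.mem_sdiff, Finset.mem_Ioc] at hx
    have : naplesStep n k occ (a.1 + 1) b = some x ↔ Goes k occ (a.1 + 1) b x := by
      rw [hstep x]
      exact ⟨fun h => h.2.2.2, fun h => ⟨hx.1.1, hx.1.2, hx.2, h⟩⟩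
    simp only [this]
    split_ifs <;> simp
  rw [Finset.sum_congr rfl h2]
  cases hs : naplesStep n k occ (a.1 + 1) b with
  | none => simp
  | some s =>
    have := (hstep s).1 hs
    simp only [Option.some.injEq]
    rw [Finset.sum_ite_eq, if_pos]
    simp only [Finset.mem_sdiff, Finset.mem_Ioc]
    exact ⟨⟨this.1, this.2.1⟩, this.2.2.1⟩

theorem G_W_step (n k : ℕ) (p : ℝ) (c j : ℕ) :
    ∑ S ∈ Finset.powersetCard j (Finset.Ioc 0 n), W k p j S * G n k p (c + 1) S =
    ∑ S ∈ Finset.powersetCard (j + 1) (Finset.Ioc 0 n), W k p (j + 1) S * G n k p c S := by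
  have h1 : ∀ S ∈ Finset.powersetCard j (Finset.Ioc 0 n), W k p j S * G n k p (c + 1) S =
      ∑ x ∈ Finset.Ioc 0 n \ S, W k p j S * (sw k p S x * G n k p c (insert x S)) := by
    intro S hS
    rw [G_succ _ _ _ _ _ (Finset.mem_powersetCard.1 hS).1, Finset.mul_sum]
  have h2 : ∀ S ∈ Finset.powersetCard (j + 1) (Finset.Ioc 0 n),
      W k p (j + 1) S * G n k p c S =
      ∑ x ∈ S, W k p j (S.erase x) * sw k p (S.erase x) x * G n k p c S := by
    intro S _
    rw [W, Finset.sum_mul]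
  rw [Finset.sum_congr rfl h1, Finset.sum_congr rfl h2, Finset.sum_sigma', Finset.sum_sigma']
  refine Finset.sum_bij' (fun z _ => ⟨insert z.2 z.1, z.2⟩) (fun z _ => ⟨z.1.erase z.2, z.2⟩)
    ?_ ?_ ?_ ?_ ?_
  · rintro ⟨S, x⟩ h
    simp only [Finset.mem_sigma, Finset.mem_powersetCard, Finset.mem_sdiff] at h ⊢
    refine ⟨⟨Finset.insert_subset h.2.1 h.1.1, ?_⟩, Finset.mem_insert_self _ _⟩
    rw [Finset.card_insert_of_notMem h.2.2, h.1.2]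
  · rintro ⟨S, x⟩ h
    simp only [Finset.mem_sigma, Finset.mem_powersetCard, Finset.mem_sdiff] at h ⊢
    refine ⟨⟨(Finset.erase_subset _ _).trans h.1.1, ?_⟩, h.1.1 h.2, Finset.notMem_erase _ _⟩
    rw [Finset.card_erase_of_mem h.2, h.1.2]; rfl
  · rintro ⟨S, x⟩ h
    simp only [Finset.mem_sigma, Finset.mem_sdiff] at h
    simp only [Finset.erase_insert h.2.2]
  · rintro ⟨S, x⟩ h
    simp only [Finset.mem_sigma] at h
    simp only [Finset.insert_erase h.2]
  · rintro ⟨S, x⟩ h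
    simp only [Finset.mem_sigma, Finset.mem_sdiff] at h
    simp only [Finset.erase_insert h.2.2]
    ring

theorem G_W (n k : ℕ) (p : ℝ) (j : ℕ) : ∀ c, G n k p (j + c) ∅ =
    ∑ S ∈ Finset.powersetCard j (Finset.Ioc 0 n), W k p j S * G n k p c S := by
  induction j with
  | zero => intro c; simp [W]
  | succ j ih =>
    intro c
    rw [← G_W_step, ← ih]
    congr 1; omega

theorem T_eq_W (k : ℕ) (p : ℝ) (n : ℕ) : T k p n = W k p n (Finset.Ioc 0 n) := by
  have h1 : T k p n = G n k p (n + 0) ∅ := rfl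
  rw [h1, G_W]
  have : Finset.powersetCard n (Finset.Ioc 0 n) = {Finset.Ioc 0 n} := by
    have := Finset.powersetCard_self (Finset.Ioc 0 n)
    simpa using this
  rw [this]
  simp [G, runPark]

/-- The recursion for the expected number of random `k`-Naples parking functions. -/
theorem stmt2 (k : ℕ) (p : ℝ) (hp0 : 0 ≤ p) (hp1 : p ≤ 1) (n : ℕ) (hn : 1 ≤ n) :
    T k p 0 = 1 ∧
    T k p n = ∑ i ∈ Finset.range n,
      (Nat.choose (n - 1) i : ℝ) * T k p i * ((n - i : ℕ) : ℝ) ^ (n - i - 2) *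
        ((i : ℝ) + 1 + p * (min k (n - i - 1) : ℕ)) := by
  refine ⟨by simp [T_eq_W, W], ?_⟩
  obtain ⟨m, rfl⟩ : ∃ m, n = m + 1 := ⟨n - 1, by omega⟩
  have h := W_Ioc_rec k p 0 m
  simp only [zero_add] at h
  rw [T_eq_W, h]
  apply Finset.sum_congr rfl
  intro i hi
  rw [Finset.mem_range] at hi
  have h2 := sw_Ioc k p 0 m i (by omega)
  simp only [zero_add, if_true, sub_zero] at h2
  rw [h2, W_block k p (m - i) (i + 1) (by omega), T_eq_W]
  have e1 : m + 1 - i - 2 = m - i - 1 := by omega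
  have e2 : m + 1 - i - 1 = m - i := by omega
  have e3 : m + 1 - i = (m - i) + 1 := by omega
  rw [e1, e2, e3]
  push_cast
  rfl
end

section
/- Let α' ∈ {1,...,n−1}^{n−1} and define α = (1, α'_1 + 1, α'_2 + 1, ..., α'_{n−1} + 1) ∈ {1,...,n}^n. Then the probability that α parks in the random 1-Naples model on n spots equals the probability that α' parks in the random 1-Naples model on n−1 spots; equivalently, g(α) = 2·g(α'). -/
theorem firstFree_shift (occ occ' : Finset ℕ) (l : List ℕ)
    (h : ∀ x ∈ l, (x + 1 ∈ occ' ↔ x ∈ occ)) :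
    firstFree occ' (l.map (· + 1)) = (firstFree occ l).map (· + 1) := by
  induction l with
  | nil => rfl
  | cons x l ih =>
    have hx := h x (by simp)
    have ih' := ih (fun y hy => h y (by simp [hy]))
    unfold firstFree at *
    rw [List.map_cons, List.find?_cons, List.find?_cons]
    by_cases hm : x ∈ occ
    · have hm' := hx.2 hm
      simpa [hm, hm'] using ih'
    · have hm' : x + 1 ∉ occ' := fun h => hm (hx.1 h)
      simp [hm, hm']

theorem range_shift (s k : ℕ) : List.range' (s + 1) k = (List.range' s k).map (· + 1) := by
  induction k generalizing s with
  | zero => rfl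
  | succ k ih => simp [List.range'_succ, ih]

theorem naplesStep_shift (m : ℕ) (occ occ' : Finset ℕ) (a : ℕ) (b : Bool) (ha : 1 ≤ a)
    (h1 : 1 ∈ occ') (h : ∀ x, 1 ≤ x → (x + 1 ∈ occ' ↔ x ∈ occ)) :
    naplesStep (m + 1) 1 occ' (a + 1) b = (naplesStep m 1 occ a b).map (· + 1) := by
  have hf : firstFree occ' (List.range' (a + 1 + 1) (m + 1 - (a + 1)))
      = (firstFree occ (List.range' (a + 1) (m - a))).map (· + 1) := by
    rw [range_shift, Nat.add_sub_add_right]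
    apply firstFree_shift
    intro x hx
    apply h
    simp only [List.mem_range'_1] at hx
    omega
  unfold naplesStep
  by_cases hm : a ∈ occ
  · have hm' := (h a ha).2 hm
    simp only [hm, hm', not_true_eq_false, if_false, hf]
    cases b
    · simp
    · simp only [if_true]
      rcases Nat.lt_or_ge a 2 with h2 | h2
      · obtain rfl : a = 1 := by omega
        simp [firstFree, h1]
      · have e1 : max (a + 1 - 1) 1 = a - 1 + 1 := by omega
        have e2 : min 1 (a + 1 - 1) = 1 := by omega
        have e3 : max (a - 1) 1 = a - 1 := by omega
        have e4 : min 1 (a - 1) = 1 := by omega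
        have hx := h (a - 1) (by omega)
        rw [e1, e2, e3, e4]
        by_cases hp : a - 1 ∈ occ
        · simp [firstFree, hp, hx.2 hp]
        · have hp' : a - 1 + 1 ∉ occ' := fun h => hp (hx.1 h)
          simp [firstFree, hp, hp']
  · have hm' : a + 1 ∉ occ' := fun h' => hm ((h a ha).1 h')
    simp [hm, hm']

theorem runPark_shift (m : ℕ) (l : List (ℕ × Bool)) (hl : ∀ p ∈ l, 1 ≤ p.1)
    (occ occ' : Finset ℕ)
    (h1 : 1 ∈ occ') (h : ∀ x, 1 ≤ x → (x + 1 ∈ occ' ↔ x ∈ occ)) :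
    runPark (naplesStep (m + 1) 1) (l.map (fun p => (p.1 + 1, p.2))) occ'
      = runPark (naplesStep m 1) l occ := by
  induction l generalizing occ occ' with
  | nil => rfl
  | cons p l ih =>
    obtain ⟨a, b⟩ := p
    have hs := naplesStep_shift m occ occ' a b (hl (a, b) (by simp)) h1 h
    rw [List.map_cons]
    simp only [runPark]
    rw [hs]
    cases naplesStep m 1 occ a b with
    | none => rfl
    | some s =>
      simp only [Option.map_some]
      apply ih (fun p hp => hl p (by simp [hp]))
      · simp [h1]
      · intro x hx
        simp [h x hx]

theorem parks_shift (m : ℕ) (α' : Fin m → ℕ) (hα : ∀ i, 1 ≤ α' i) (α : Fin (m + 1) → ℕ)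
    (h0 : α 0 = 1) (hs : ∀ i : Fin m, α i.succ = α' i + 1) (b : Fin (m + 1) → Bool) :
    parksNaples (m + 1) 1 α b = parksNaples m 1 α' (fun i => b i.succ) := by
  unfold parksNaples
  rw [List.ofFn_succ]
  have e : naplesStep (m + 1) 1 ∅ (α 0) (b 0) = some 1 := by simp [naplesStep, h0]
  simp only [runPark, e]
  rw [← runPark_shift m _ _ ∅ (insert 1 ∅) (by simp) (by intro x hx; simp; omega)]
  · congr 1
    rw [List.map_ofFn]
    congr 1
    funext i
    simp [hs]
  · intro p hp
    rw [List.mem_ofFn] at hp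
    obtain ⟨i, rfl⟩ := hp
    exact hα i

theorem parks_first (m : ℕ) (α : Fin (m + 1) → ℕ) (b c : Fin (m + 1) → Bool)
    (h : ∀ i : Fin m, b i.succ = c i.succ) :
    parksNaples (m + 1) 1 α b = parksNaples (m + 1) 1 α c := by
  unfold parksNaples
  rw [List.ofFn_succ, List.ofFn_succ]
  simp [runPark, naplesStep, h]

theorem prob_shift (m : ℕ) (α' : Fin m → ℕ) (hα : ∀ i, 1 ≤ α' i) (α : Fin (m + 1) → ℕ)
    (h0 : α 0 = 1) (hs : ∀ i : Fin m, α i.succ = α' i + 1) (p : ℝ) :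
    probNaples (m + 1) 1 p α = probNaples m 1 p α' := by
  unfold probNaples
  rw [← (Fin.consEquiv (fun _ : Fin (m + 1) => Bool)).sum_comp, Fintype.sum_prod_type]
  simp only [parks_shift m α' hα α h0 hs, Fin.consEquiv_apply, Fin.prod_univ_succ, Fin.cons_zero,
    Fin.cons_succ, mul_assoc, ← Finset.mul_sum]
  simp [← add_mul]

theorem g_shift (k : ℕ) (α' : Fin (k + 1) → ℕ) (hα : ∀ i, 1 ≤ α' i) (α : Fin (k + 1 + 1) → ℕ)
    (h0 : α 0 = 1) (hs : ∀ i : Fin (k + 1), α i.succ = α' i + 1) :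
    g (k + 1 + 1) α = 2 * g (k + 1) α' := by
  unfold g
  have key : ∀ (x : Bool) (β : Fin k → Bool),
      parksUnder (k + 1 + 1) α (Fin.cons x β : Fin (k + 1) → Bool) = parksUnder (k + 1) α' β := by
    intro x β
    unfold parksUnder
    rw [parks_shift _ α' hα α h0 hs]
    apply parks_first
    intro i
    have : (⟨i.1 + 1, by omega⟩ : Fin (k + 1)) = i.succ := rfl
    simp [this]
  simp only [Finset.card_filter]
  change ∑ β : Fin (k + 1) → Bool, _ = 2 * ∑ β : Fin k → Bool, _
  rw [← (Fin.consEquiv (fun _ : Fin (k + 1) => Bool)).sum_comp, Fintype.sum_prod_type]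
  have key2 : ∀ (x : Bool) (β : Fin k → Bool),
      parksUnder (k + 1 + 1) α ((Fin.consEquiv (fun _ : Fin (k + 1) => Bool)) (x, β))
        = parksUnder (k + 1) α' β := key
  have e : ∀ x : Bool, (∑ β : Fin k → Bool, if parksUnder (k + 1 + 1) α
      ((Fin.consEquiv (fun _ : Fin (k + 1) => Bool)) (x, β)) = true then 1 else 0)
      = ∑ β : Fin k → Bool, if parksUnder (k + 1) α' β = true then 1 else 0 :=
    fun x => Finset.sum_congr rfl (fun β _ => by rw [key2])
  rw [Fintype.sum_bool, two_mul]
  exact congrArg₂ (· + ·) (e true) (e false)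

/-- Prepending a car with preference `1` and shifting all preferences up by one does not
change the probability of parking; equivalently `g(α) = 2 g(α')`. -/
theorem stmt14 (n : ℕ) (hn : 2 ≤ n) (α' : Fin (n - 1) → Fin (n - 1)) :
    probNaples n 1 (1/2)
        (fun i => if i.1 = 0 then 1 else ((α' ⟨i.1 - 1, by have := i.2; omega⟩).1 + 1) + 1)
      = probNaples (n - 1) 1 (1/2) (fun i => (α' i).1 + 1) ∧
    g n (fun i => if i.1 = 0 then 1 else ((α' ⟨i.1 - 1, by have := i.2; omega⟩).1 + 1) + 1)
      = 2 * g (n - 1) (fun i => (α' i).1 + 1) := by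
  obtain ⟨k, rfl⟩ : ∃ k, n = k + 1 + 1 := ⟨n - 2, by omega⟩
  refine ⟨prob_shift (k + 1) (fun i => (α' i).1 + 1) ?_ _ ?_ ?_ _,
    g_shift k (fun i => (α' i).1 + 1) ?_ _ ?_ ?_⟩
  · exact fun i => Nat.le_add_left 1 _
  · rfl
  · exact fun i => rfl
  · exact fun i => Nat.le_add_left 1 _
  · rfl
  · exact fun i => rfl
end

section
/- Let P(n) = (n+1)^{n−1} be the number of parking functions on n cars, let N(n) be the number of 1-Naples parking functions on n cars, and let T(n) be the expected number of random 1-Naples parking functions with p = 1/2. Then for all n ≥ 1, P(n) ≤ T(n) ≤ (N(n) + P(n))/2. -/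
noncomputable def npRR (m : ℕ) : ℝ := ((m:ℝ)+1)^(m-1) / (m.factorial : ℝ)

noncomputable def npE (j : ℕ) (x : ℝ) : ℝ := x^j / (j.factorial : ℝ)

theorem npE_deriv (j : ℕ) (x : ℝ) : HasDerivAt (npE (j+1)) (npE j x) x := by
  have h := (hasDerivAt_pow (j+1) x).div_const ((j+1).factorial : ℝ)
  have e : ((j+1 : ℕ):ℝ) * x^(j+1-1) / ((j+1).factorial : ℝ) = npE j x := by
    have : (j.factorial : ℝ) ≠ 0 := by positivity
    unfold npE
    rw [Nat.factorial_succ]; push_cast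
    field_simp
  rw [e] at h
  exact h

noncomputable def npB (n : ℕ) (y : ℝ) : ℝ :=
  ∑ k ∈ Finset.range (n+1), npRR k * npE (n-k) (y + n - k)

theorem npB_deriv (n : ℕ) (y : ℝ) : HasDerivAt (npB (n+1)) (npB n (y+1)) y := by
  have e : npB (n+1) = fun y => (∑ k ∈ Finset.range (n+1), npRR k * npE (n-k+1) (y + (n+1-k))) + npRR (n+1) := by
    funext z
    unfold npB
    rw [Finset.sum_range_succ]
    congr 1
    · apply Finset.sum_congr rfl
      intro k hk
      have : n + 1 - k = n - k + 1 := by have := Finset.mem_range.1 hk; omega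
      rw [this]; congr 2; push_cast; ring
    · simp [npE]
  rw [e]
  apply HasDerivAt.add_const
  unfold npB
  apply HasDerivAt.fun_sum
  intro k hk
  apply HasDerivAt.const_mul
  have := (npE_deriv (n-k) (y + (n+1-k))).comp_add_const y (n+1-k : ℝ)
  have e2 : y + 1 + (n:ℝ) - k = y + (n+1-k) := by ring
  rw [e2]; exact this

theorem npB_zero (n : ℕ) : npB (n+1) (-1 - (n+1:ℝ)) = 0 := by
  have key : ∑ k ∈ Finset.range (n+2), ((-1:ℝ))^(n+1-k) * ((n+1).choose k : ℝ) * ((k:ℝ)+1)^n = 0 := by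
    have h1 := fwdDiff_iter_pow_eq_zero_of_lt (R := ℝ) (j := n) (n := n+1) (by omega)
    have h2 := fwdDiff_iter_eq_sum_shift (1:ℝ) (fun x : ℝ => x^n) (n+1) 1
    rw [h1] at h2
    simp only [Pi.zero_apply] at h2
    rw [h2]
    apply Finset.sum_congr rfl
    intro k hk
    simp [add_comm]
  unfold npB
  have : ∀ k ∈ Finset.range (n+2), npRR k * npE (n+1-k) (-1 - (n+1:ℝ) + (n+1:ℕ) - k) =
     (((-1:ℝ))^(n+1-k) * ((n+1).choose k : ℝ) * ((k:ℝ)+1)^n) / ((n+1).factorial : ℝ) := by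
    intro k hk
    have hk' : k ≤ n+1 := by have := Finset.mem_range.1 hk; omega
    have e1 : (-1 - (n+1:ℝ) + (n+1:ℕ) - k) = (-1) * ((k:ℝ)+1) := by push_cast; ring
    have e2 : ((k:ℝ)+1)^n = ((k:ℝ)+1)^(k-1) * ((k:ℝ)+1)^(n+1-k) := by
      rcases k with _ | k
      · simp
      · rw [← pow_add]; congr 1; omega
    rw [e1, npE, npRR, mul_pow, e2, Nat.cast_choose ℝ hk']
    have : (k.factorial : ℝ) ≠ 0 := by positivity
    have : ((n+1-k).factorial : ℝ) ≠ 0 := by positivity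
    have : ((n+1).factorial : ℝ) ≠ 0 := by positivity
    field_simp
  rw [Finset.sum_congr rfl this, ← Finset.sum_div, key, zero_div]

theorem npB_eq (n : ℕ) : ∀ y, npB n y = npE n (1 + y + n) := by
  induction n with
  | zero => intro y; simp [npB, npE, npRR]
  | succ n ih =>
    intro y
    have hd : ∀ z, HasDerivAt (fun z => npB (n+1) z - npE (n+1) (z + (1 + (n+1)))) 0 z := by
      intro z
      have h1 := npB_deriv n z
      have h2 := (npE_deriv n (z + (1 + (n+1)))).comp_add_const z (1 + (n+1) : ℝ)
      have h3 := h1.sub h2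
      rw [ih] at h3
      have : npE n (1 + (z+1) + n) - npE n (z + (1 + (n+1))) = 0 := by
        rw [sub_eq_zero]; congr 1; ring
      rw [this] at h3
      exact h3
    have hc := is_const_of_deriv_eq_zero (fun z => (hd z).differentiableAt) (fun z => (hd z).deriv) y (-1 - (n+1:ℝ))
    simp only [npB_zero] at hc
    have : npE (n+1) ((-1 - (n+1:ℝ)) + (1 + (n+1))) = 0 := by simp [npE]
    rw [this] at hc
    have e : npE (n+1) (1 + y + (n+1:ℕ)) = npE (n+1) (y + (1 + (n+1))) := by congr 1; push_cast; ring
    rw [e]; linarith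

theorem npRR_rec (m : ℕ) : (m:ℝ) * npRR m =
    ∑ i ∈ Finset.range m, npRR i * npRR (m-1-i) * ((i:ℝ)+1) := by
  rcases m with _ | n
  · simp
  have h := npB_eq n 1
  rw [npB, ← Finset.sum_range_reflect] at h
  have : ((n+1:ℕ):ℝ) * npRR (n+1) = npE n (1+1+n) := by
    unfold npRR npE
    rw [Nat.factorial_succ]
    have : (n.factorial : ℝ) ≠ 0 := by positivity
    push_cast
    field_simp
    ring
  rw [this, ← h]
  apply Finset.sum_congr rfl
  intro i hi
  have hi' : i ≤ n := by have := Finset.mem_range.1 hi; omega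
  have e1 : n + 1 - 1 - i = n - i := by omega
  have e2 : n - (n - i) = i := by omega
  rw [e1, e2]
  have e3 : npE i (1 + (n:ℝ) - (n-i:ℕ)) = npRR i * ((i:ℝ)+1) := by
    rw [Nat.cast_sub hi', npE, npRR]
    have : (1 + (n:ℝ) - (n - i)) = i + 1 := by ring
    rw [this]
    rcases i with _ | i
    · simp
    · simp only [Nat.add_sub_cancel]; rw [pow_succ]; ring
  rw [e3]; ring
/-- weight with which a car parks at the free spot `s` with preference `a`. -/
noncomputable def npQ (p : ℝ) (S : Finset ℕ) (s a : ℕ) : ℝ :=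
  if a = s then 1
  else if a = s + 1 then (if a ∈ S then p else 0)
  else if a < s ∧ ∀ t ∈ Finset.Ico a s, t ∈ S then
    (if a = 1 ∨ a - 1 ∈ S then 1 else 1 - p)
  else 0

noncomputable def npW (p : ℝ) (S : Finset ℕ) (s : ℕ) : ℝ :=
  ∑ a ∈ Finset.Icc 1 (s+1), npQ p S s a

noncomputable def npMk (p : ℝ) : ℕ → Finset ℕ → ℝ
  | 0, _ => 1
  | k+1, S => (∑ s ∈ S, npMk p k (S.erase s) * npW p (S.erase s) s) / ((k:ℝ)+1)

noncomputable def npM (p : ℝ) (S : Finset ℕ) : ℝ := npMk p S.card S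

theorem npM_empty (p : ℝ) : npM p ∅ = 1 := by simp [npM, npMk]

theorem npM_rec (p : ℝ) (S : Finset ℕ) :
    (S.card : ℝ) * npM p S = ∑ s ∈ S, npM p (S.erase s) * npW p (S.erase s) s := by
  rcases h : S.card with _ | k
  · rw [Finset.card_eq_zero] at h; subst h; simp
  · unfold npM
    rw [h, npMk]
    have : (k:ℝ) + 1 ≠ 0 := by positivity
    push_cast
    rw [mul_div_cancel₀ _ this]
    apply Finset.sum_congr rfl
    intro s hs
    rw [Finset.card_erase_of_mem hs, h]; rfl

theorem npW_left (p : ℝ) (c : ℕ) (S1 S2 : Finset ℕ) (h2 : ∀ x ∈ S2, c < x) (s : ℕ) (hs : s < c) :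
    npW p (S1 ∪ S2) s = npW p S1 s := by
  unfold npW
  apply Finset.sum_congr rfl
  intro a ha
  rw [Finset.mem_Icc] at ha
  have key : ∀ t, t ≤ c → (t ∈ S1 ∪ S2 ↔ t ∈ S1) := by
    intro t ht
    rw [Finset.mem_union]
    constructor
    · rintro (h | h)
      · exact h
      · have := h2 t h; omega
    · exact Or.inl
  unfold npQ
  have k1 : (∀ t ∈ Finset.Ico a s, t ∈ S1 ∪ S2) ↔ (∀ t ∈ Finset.Ico a s, t ∈ S1) := by
    apply forall₂_congr
    intro t ht
    rw [Finset.mem_Ico] at ht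
    exact key t (by omega)
  simp only [k1, key a (by omega), key (a-1) (by omega)]

theorem npW_right (p : ℝ) (c : ℕ) (S1 S2 : Finset ℕ) (h1 : ∀ x ∈ S1, x < c)
    (h2 : ∀ x ∈ S2, c < x) (s : ℕ) (hs : c < s) :
    npW p (S1 ∪ S2) s = npW p S2 s := by
  unfold npW
  apply Finset.sum_congr rfl
  intro a ha
  rw [Finset.mem_Icc] at ha
  have key : ∀ t, c ≤ t → (t ∈ S1 ∪ S2 ↔ t ∈ S2) := by
    intro t ht
    rw [Finset.mem_union]
    constructor
    · rintro (h | h)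
      · have := h1 t h; omega
      · exact h
    · exact Or.inr
  unfold npQ
  by_cases hac : a ≤ c
  · have n1 : ¬ (∀ t ∈ Finset.Ico a s, t ∈ S1 ∪ S2) := by
      intro h
      have := (key c le_rfl).1 (h c (Finset.mem_Ico.2 ⟨hac, hs⟩))
      exact absurd (h2 c this) (by omega)
    have n2 : ¬ (∀ t ∈ Finset.Ico a s, t ∈ S2) := by
      intro h
      have := h c (Finset.mem_Ico.2 ⟨hac, hs⟩)
      exact absurd (h2 c this) (by omega)
    have e1 : a ≠ s := by omega
    have e2 : a ≠ s + 1 := by omega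
    simp only [n1, n2, e1, e2, if_false, and_false]
  · have k1 : (∀ t ∈ Finset.Ico a s, t ∈ S1 ∪ S2) ↔ (∀ t ∈ Finset.Ico a s, t ∈ S2) := by
      apply forall₂_congr
      intro t ht
      rw [Finset.mem_Ico] at ht
      exact key t (by omega)
    simp only [k1, key a (by omega), key (a-1) (by omega)]

theorem npM_union (p : ℝ) (c : ℕ) : ∀ (k : ℕ) (S1 S2 : Finset ℕ), S1.card + S2.card = k →
    (∀ x ∈ S1, x < c) → (∀ x ∈ S2, c < x) → npM p (S1 ∪ S2) = npM p S1 * npM p S2 := by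
  intro k
  induction k with
  | zero =>
    intro S1 S2 hk _ _
    have e1 : S1 = ∅ := Finset.card_eq_zero.1 (by omega)
    have e2 : S2 = ∅ := Finset.card_eq_zero.1 (by omega)
    subst e1 e2; simp [npM_empty]
  | succ k ih =>
    intro S1 S2 hk h1 h2
    have hd : Disjoint S1 S2 := by
      rw [Finset.disjoint_left]; intro x hx hx'
      have := h1 x hx; have := h2 x hx'; omega
    have hr := npM_rec p (S1 ∪ S2)
    rw [Finset.card_union_of_disjoint hd, Finset.sum_union hd] at hr
    have a1 : ∑ s ∈ S1, npM p ((S1 ∪ S2).erase s) * npW p ((S1 ∪ S2).erase s) s =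
        (S1.card : ℝ) * npM p S1 * npM p S2 := by
      rw [npM_rec, Finset.sum_mul]
      apply Finset.sum_congr rfl
      intro s hs
      have hs2 : s ∉ S2 := Finset.disjoint_left.1 hd hs
      have hsub : ∀ x ∈ S1.erase s, x < c := fun x hx => h1 x (Finset.mem_of_mem_erase hx)
      rw [Finset.erase_union_distrib, Finset.erase_eq_of_notMem hs2,
        ih _ _ (by have := Finset.card_erase_add_one hs; omega) hsub h2, npW_left p c _ _ h2 s (h1 s hs)]
      ring
    have a2 : ∑ s ∈ S2, npM p ((S1 ∪ S2).erase s) * npW p ((S1 ∪ S2).erase s) s =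
        (S2.card : ℝ) * npM p S2 * npM p S1 := by
      rw [npM_rec, Finset.sum_mul]
      apply Finset.sum_congr rfl
      intro s hs
      have hs1 : s ∉ S1 := Finset.disjoint_right.1 hd hs
      have hsub : ∀ x ∈ S2.erase s, c < x := fun x hx => h2 x (Finset.mem_of_mem_erase hx)
      rw [Finset.erase_union_distrib, Finset.erase_eq_of_notMem hs1,
        ih _ _ (by have := Finset.card_erase_add_one hs; omega) h1 hsub,
        npW_right p c _ _ h1 hsub s (h2 s hs)]
      ring
    rw [a1, a2] at hr
    have hne : ((S1.card + S2.card : ℕ) : ℝ) ≠ 0 := by rw [hk]; positivity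
    apply mul_left_cancel₀ hne
    rw [hr]; push_cast; ring

theorem npW_interval (p : ℝ) (c m i : ℕ) (hc : 1 ≤ c) (hi : i < m) :
    npW p ((Finset.Ico c (c+m)).erase (c+i)) (c+i) =
      (i:ℝ) + 1 + (if i + 1 < m then p else 0) - (if c ≠ 1 ∧ 0 < i then p else 0) := by
  unfold npW
  have hs : Finset.Icc 1 (c+i+1) = Finset.Ico 1 c ∪ (Finset.Ico c (c+i) ∪ {c+i, c+i+1}) := by
    ext x; simp only [Finset.mem_Icc, Finset.mem_union, Finset.mem_Ico, Finset.mem_insert, Finset.mem_singleton]; omega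
  rw [hs, Finset.sum_union, Finset.sum_union, Finset.sum_pair (by omega)]
  rotate_left
  · rw [Finset.disjoint_left]; intro x; simp only [Finset.mem_Ico, Finset.mem_insert, Finset.mem_singleton]; omega
  · rw [Finset.disjoint_left]; intro x; simp only [Finset.mem_Ico, Finset.mem_union, Finset.mem_insert, Finset.mem_singleton]; omega
  have h0 : ∑ a ∈ Finset.Ico 1 c, npQ p ((Finset.Ico c (c+m)).erase (c+i)) (c+i) a = if c ≠ 1 ∧ i = 0 then 0 else 0 := by
    rw [ite_self]
    apply Finset.sum_eq_zero
    intro a ha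
    rw [Finset.mem_Ico] at ha
    unfold npQ
    rw [if_neg (by omega), if_neg (by omega), if_neg]
    rintro ⟨_, h⟩
    have := h a (by rw [Finset.mem_Ico]; omega)
    rw [Finset.mem_erase, Finset.mem_Ico] at this
    omega
  have h1 : ∑ a ∈ Finset.Ico c (c+i), npQ p ((Finset.Ico c (c+m)).erase (c+i)) (c+i) a =
      ∑ a ∈ Finset.Ico c (c+i), (1 - if a = c then (if c ≠ 1 then p else 0) else 0) := by
    apply Finset.sum_congr rfl
    intro a ha
    rw [Finset.mem_Ico] at ha
    unfold npQ
    rw [if_neg (by omega), if_neg (by omega), if_pos]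
    · simp only [Finset.mem_erase, Finset.mem_Ico]
      by_cases h1 : a = c
      · by_cases h2 : c = 1
        · rw [if_pos (by omega)]; simp [h2]
        · rw [if_neg (by omega)]; simp [h1, h2]
      · rw [if_pos (by omega)]; simp [h1]
    · refine ⟨by omega, ?_⟩
      intro t ht
      rw [Finset.mem_Ico] at ht
      rw [Finset.mem_erase, Finset.mem_Ico]; omega
  have h2 : npQ p ((Finset.Ico c (c+m)).erase (c+i)) (c+i) (c+i) = 1 := by simp [npQ]
  have h3 : npQ p ((Finset.Ico c (c+m)).erase (c+i)) (c+i) (c+i+1) = if i + 1 < m then p else 0 := by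
    unfold npQ
    rw [if_neg (by omega), if_pos rfl]
    congr 1
    rw [Finset.mem_erase, Finset.mem_Ico, eq_iff_iff]; omega
  rw [h0, h1, h2, h3, ite_self, Finset.sum_sub_distrib, Finset.sum_ite_eq']
  simp only [Finset.mem_Ico, Finset.sum_const, Nat.card_Ico, nsmul_eq_mul, mul_one, add_tsub_cancel_left]
  by_cases hi0 : 0 < i
  · by_cases h2 : c = 1 <;> simp [h2, hi0] <;> ring
  · simp [hi0]; ring

theorem npM_interval (p : ℝ) (c m : ℕ) (hc : 1 ≤ c) :
    (m:ℝ) * npM p (Finset.Ico c (c+m)) = ∑ i ∈ Finset.range m,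
      npM p (Finset.Ico c (c+i)) * npM p (Finset.Ico (c+i+1) (c+i+1+(m-1-i))) *
      ((i:ℝ) + 1 + (if i + 1 < m then p else 0) - (if c ≠ 1 ∧ 0 < i then p else 0)) := by
  have h := npM_rec p (Finset.Ico c (c+m))
  rw [Nat.card_Ico, add_tsub_cancel_left] at h
  rw [h, Finset.sum_Ico_eq_sum_range, add_tsub_cancel_left]
  apply Finset.sum_congr rfl
  intro i hi
  rw [Finset.mem_range] at hi
  rw [npW_interval p c m i hc hi]
  congr 1
  have : (Finset.Ico c (c+m)).erase (c+i) = Finset.Ico c (c+i) ∪ Finset.Ico (c+i+1) (c+i+1+(m-1-i)) := by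
    ext x; simp only [Finset.mem_erase, Finset.mem_union, Finset.mem_Ico]; omega
  rw [this]
  apply npM_union p (c+i) _ _ _ rfl
  · intro x hx; rw [Finset.mem_Ico] at hx; omega
  · intro x hx; rw [Finset.mem_Ico] at hx; omega

theorem npM_right (p : ℝ) : ∀ m c, 2 ≤ c → npM p (Finset.Ico c (c+m)) = npRR m := by
  intro m
  induction m using Nat.strong_induction_on with
  | _ m ih =>
    intro c hc
    rcases Nat.eq_zero_or_pos m with rfl | hm
    · simp [npM_empty, npRR]
    have h := npM_interval p c m (by omega)
    have e : ∀ i ∈ Finset.range m,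
      npM p (Finset.Ico c (c+i)) * npM p (Finset.Ico (c+i+1) (c+i+1+(m-1-i))) *
      ((i:ℝ) + 1 + (if i + 1 < m then p else 0) - (if c ≠ 1 ∧ 0 < i then p else 0)) =
      npRR i * npRR (m-1-i) * ((i:ℝ)+1) + (npRR i * npRR (m-1-i) * (if i + 1 < m then p else 0)
        - npRR i * npRR (m-1-i) * (if 0 < i then p else 0)) := by
      intro i hi
      rw [Finset.mem_range] at hi
      rw [ih i hi c hc, ih (m-1-i) (by omega) (c+i+1) (by omega)]
      have : (c ≠ 1 ∧ 0 < i) ↔ 0 < i := by omega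
      simp only [this]
      ring
    rw [Finset.sum_congr rfl e, Finset.sum_add_distrib, Finset.sum_sub_distrib, ← npRR_rec] at h
    have e2 : ∑ i ∈ Finset.range m, npRR i * npRR (m-1-i) * (if i + 1 < m then p else 0) =
        ∑ i ∈ Finset.range m, npRR i * npRR (m-1-i) * (if 0 < i then p else 0) := by
      rw [← Finset.sum_range_reflect]
      apply Finset.sum_congr rfl
      intro i hi
      rw [Finset.mem_range] at hi
      have a1 : m - 1 - (m - 1 - i) = i := by omega
      have a2 : (m - 1 - i + 1 < m) ↔ 0 < i := by omega
      simp only [a1, a2]; ring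
    rw [e2, sub_self, add_zero] at h
    exact mul_left_cancel₀ (by positivity) h

theorem npM_left (p : ℝ) (m : ℕ) :
    (m:ℝ) * npM p (Finset.Ico 1 (1+m)) = ∑ i ∈ Finset.range m,
      npM p (Finset.Ico 1 (1+i)) * npRR (m-1-i) *
      ((i:ℝ) + 1 + (if i + 1 < m then p else 0)) := by
  rw [npM_interval p 1 m le_rfl]
  apply Finset.sum_congr rfl
  intro i hi
  rw [npM_right p (m-1-i) (1+i+1) (by omega)]
  simp

theorem npRR_pos (m : ℕ) : 0 < npRR m := by unfold npRR; positivity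

theorem npM_ge (p : ℝ) (hp : 0 ≤ p) : ∀ m, npRR m ≤ npM p (Finset.Ico 1 (1+m)) := by
  intro m
  induction m using Nat.strong_induction_on with
  | _ m ih =>
    rcases Nat.eq_zero_or_pos m with rfl | hm
    · simp [npM_empty, npRR]
    refine le_of_mul_le_mul_left ?_ (show (0:ℝ) < m by positivity)
    rw [npRR_rec, npM_left]
    apply Finset.sum_le_sum
    intro i hi
    rw [Finset.mem_range] at hi
    have h1 := ih i hi
    have h2 := npRR_pos i
    have h3 := npRR_pos (m-1-i)
    have h4 : (0:ℝ) ≤ if i + 1 < m then p else 0 := by split_ifs <;> linarith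
    exact mul_le_mul (mul_le_mul_of_nonneg_right h1 h3.le) (by linarith) (by positivity)
      (mul_nonneg (by linarith) h3.le)

theorem npM_half : ∀ m, npM (1/2) (Finset.Ico 1 (1+m)) ≤
    (npM 1 (Finset.Ico 1 (1+m)) + npRR m) / 2 := by
  intro m
  induction m using Nat.strong_induction_on with
  | _ m ih =>
    rcases Nat.eq_zero_or_pos m with rfl | hm
    · simp [npM_empty, npRR]
    refine le_of_mul_le_mul_left ?_ (show (0:ℝ) < m by positivity)
    have e : (m:ℝ) * ((npM 1 (Finset.Ico 1 (1+m)) + npRR m) / 2) =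
      (m * npM 1 (Finset.Ico 1 (1+m)) + m * npRR m) / 2 := by ring
    rw [e, npRR_rec, npM_left, npM_left, ← Finset.sum_add_distrib, Finset.sum_div]
    apply Finset.sum_le_sum
    intro i hi
    rw [Finset.mem_range] at hi
    have h1 := ih i hi
    have h3 := npRR_pos (m-1-i)
    have h5 := npM_ge 1 zero_le_one i
    have hi0 : (0:ℝ) ≤ i := by positivity
    generalize npM (1/2) (Finset.Ico 1 (1+i)) = t at *
    generalize npM 1 (Finset.Ico 1 (1+i)) = u at *
    generalize npRR i = v at *
    generalize npRR (m-1-i) = r at *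
    have main : t * ((i:ℝ) + 1 + (if i + 1 < m then 1/2 else 0)) ≤
      (u * ((i:ℝ) + 1 + (if i + 1 < m then 1 else 0)) + v * ((i:ℝ)+1)) / 2 := by
      split_ifs
      · nlinarith
      · nlinarith
    have := mul_le_mul_of_nonneg_left main h3.le
    linarith
noncomputable def npF (p : ℝ) (n : ℕ) : ℕ → Finset ℕ → ℝ
  | 0, _ => 1
  | k+1, S => ∑ a : Fin n, ∑ b : Bool, (if b then p else 1 - p) *
      ((naplesStep n 1 S (a.1+1) b).elim 0 (fun s => npF p n k (insert s S)))

theorem npF_eq (p : ℝ) (n : ℕ) : ∀ (k : ℕ) (S : Finset ℕ),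
    ∑ α : Fin k → Fin n, ∑ b : Fin k → Bool, (∏ i, if b i then p else 1 - p) *
      (if runPark (naplesStep n 1) (List.ofFn (fun i => ((α i).1 + 1, b i))) S then (1:ℝ) else 0)
    = npF p n k S := by
  intro k
  induction k with
  | zero => intro S; simp [npF, runPark]
  | succ k ih =>
    intro S
    rw [npF, ← (Fin.consEquiv (fun _ : Fin (k+1) => Fin n)).sum_comp, Fintype.sum_prod_type]
    apply Finset.sum_congr rfl
    intro a _
    have h1 : ∀ α : Fin k → Fin n, ∀ f : (Fin (k+1) → Bool) → ℝ,
        ∑ b : Fin (k+1) → Bool, f b = ∑ b0 : Bool, ∑ b : Fin k → Bool, f (Fin.cons b0 b) := by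
      intro α f
      rw [← (Fin.consEquiv (fun _ : Fin (k+1) => Bool)).sum_comp, Fintype.sum_prod_type]
      rfl
    simp_rw [h1 (fun _ => a)]
    rw [Finset.sum_comm]
    apply Finset.sum_congr rfl
    intro b0 _
    simp only [Fin.consEquiv, Equiv.coe_fn_mk, List.ofFn_succ, Fin.cons_zero, Fin.cons_succ,
      Fin.prod_univ_succ, runPark]
    rcases h : naplesStep n 1 S (a.1+1) b0 with _ | s
    · simp
    · simp only [Option.elim_some]
      rw [← ih (insert s S), Finset.mul_sum]
      apply Finset.sum_congr rfl
      intro α _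
      rw [Finset.mul_sum]
      apply Finset.sum_congr rfl
      intro b _
      ring

theorem npT_eq (p : ℝ) (n : ℕ) : T 1 p n = npF p n n ∅ := by
  rw [← npF_eq]; rfl

theorem npStep (n : ℕ) (S : Finset ℕ) (hS : S ⊆ Finset.Icc 1 n) (a : ℕ) (ha : 1 ≤ a) (han : a ≤ n)
    (b : Bool) (s : ℕ) : naplesStep n 1 S a b = some s ↔
    s ∈ Finset.Icc 1 n \ S ∧ (a = s ∨ (a = s + 1 ∧ a ∈ S ∧ b = true) ∨
      (a < s ∧ (∀ t ∈ Finset.Ico a s, t ∈ S) ∧ (a = 1 ∨ a - 1 ∈ S ∨ b = false))) := by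
  have hf : ∀ s, firstFree S (List.range' (a + 1) (n - a)) = some s ↔
      s ∉ S ∧ a < s ∧ s ≤ n ∧ ∀ t, a < t → t < s → t ∈ S := by
    intro s
    unfold firstFree
    rw [List.find?_range'_eq_some]
    simp only [decide_eq_true_eq, List.mem_range'_1, Bool.not_eq_true', decide_eq_false_iff_not, not_not]
    constructor
    · rintro ⟨h1, h2, h3⟩
      exact ⟨h1, by omega, by omega, fun t => h3 t⟩
    · rintro ⟨h1, h2, h3, h4⟩
      exact ⟨h1, by omega, fun t => h4 t⟩
  have hf2 : a ∈ S → ((s ∉ S ∧ a < s ∧ s ≤ n ∧ ∀ t, a < t → t < s → t ∈ S) ↔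
      (s ∈ Finset.Icc 1 n \ S ∧ a < s ∧ (∀ t ∈ Finset.Ico a s, t ∈ S))) := by
    intro haS
    simp only [Finset.mem_sdiff, Finset.mem_Icc, Finset.mem_Ico]
    constructor
    · rintro ⟨h1, h2, h3, h4⟩
      refine ⟨⟨⟨by omega, h3⟩, h1⟩, h2, ?_⟩
      intro t ht
      rcases eq_or_lt_of_le ht.1 with h | h
      · rwa [← h]
      · exact h4 t h ht.2
    · rintro ⟨⟨⟨h0, h3⟩, h1⟩, h2, h4⟩
      exact ⟨h1, h2, h3, fun t h h' => h4 t ⟨h.le, h'⟩⟩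
  unfold naplesStep
  by_cases haS : a ∈ S
  · have hne : s ∈ Finset.Icc 1 n \ S → a ≠ s := by
      rintro h rfl
      exact (Finset.mem_sdiff.1 h).2 haS
    simp only [haS, not_true_eq_false, if_false]
    rcases b with _ | _
    · simp only [Bool.false_eq_true, if_false]
      rw [hf, hf2 haS]
      constructor
      · rintro ⟨h1, h2, h3⟩
        exact ⟨h1, Or.inr (Or.inr ⟨h2, h3, Or.inr (Or.inr (by trivial))⟩)⟩
      · rintro ⟨h1, h | h | h⟩
        · exact absurd h (hne h1)
        · exact absurd h.2.2 (by simp)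
        · exact ⟨h1, h.1, h.2.1⟩
    · simp only [if_true]
      by_cases ha1 : a = 1
      · have : firstFree S (List.range' (max (a - 1) 1) (min 1 (a - 1))).reverse = none := by
          subst ha1; rfl
        rw [this]
        simp only
        rw [hf, hf2 haS]
        constructor
        · rintro ⟨h1, h2, h3⟩
          exact ⟨h1, Or.inr (Or.inr ⟨h2, h3, Or.inl ha1⟩)⟩
        · rintro ⟨h1, h | h | h⟩
          · exact absurd h (hne h1)
          · have := Finset.mem_Icc.1 (Finset.mem_sdiff.1 h1).1
            omega
          · exact ⟨h1, h.1, h.2.1⟩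
      · have hl : (List.range' (max (a - 1) 1) (min 1 (a - 1))).reverse = [a-1] := by
          have e1 : max (a-1) 1 = a - 1 := by omega
          have e2 : min 1 (a-1) = 1 := by omega
          rw [e1, e2]; rfl
        rw [hl]
        by_cases hb : a - 1 ∈ S
        · have : firstFree S [a-1] = none := by simp [firstFree, hb]
          rw [this]
          simp only
          rw [hf, hf2 haS]
          constructor
          · rintro ⟨h1, h2, h3⟩
            exact ⟨h1, Or.inr (Or.inr ⟨h2, h3, Or.inr (Or.inl hb)⟩)⟩
          · rintro ⟨h1, h | h | h⟩
            · exact absurd h (hne h1)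
            · have h4 : a - 1 = s := by omega
              rw [h4] at hb
              exact absurd hb (Finset.mem_sdiff.1 h1).2
            · exact ⟨h1, h.1, h.2.1⟩
        · have : firstFree S [a-1] = some (a-1) := by simp [firstFree, hb]
          rw [this]
          simp only [Option.some.injEq]
          constructor
          · rintro rfl
            refine ⟨?_, Or.inr (Or.inl ⟨by omega, trivial, trivial⟩)⟩
            rw [Finset.mem_sdiff, Finset.mem_Icc]
            exact ⟨by omega, hb⟩
          · rintro ⟨h1, h | h | h⟩
            · exact absurd h (hne h1)
            · omega
            · rcases h.2.2 with h | h | h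
              · exact absurd h ha1
              · exact absurd h hb
              · simp at h
  · simp only [haS, not_false_eq_true, if_true, Option.some.injEq]
    constructor
    · rintro rfl
      refine ⟨?_, Or.inl rfl⟩
      rw [Finset.mem_sdiff, Finset.mem_Icc]
      exact ⟨by omega, haS⟩
    · rintro ⟨h1, h | h | h⟩
      · exact h
      · exact absurd h.2.1 (by simp)
      · exact absurd (h.2.1 a (by rw [Finset.mem_Ico]; omega)) haS

theorem npQ_step (p : ℝ) (n : ℕ) (S : Finset ℕ) (hS : S ⊆ Finset.Icc 1 n) (a : ℕ) (ha : 1 ≤ a)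
    (han : a ≤ n) (s : ℕ) (hs : s ∈ Finset.Icc 1 n \ S) :
    ∑ b : Bool, (if b then p else 1 - p) * (if naplesStep n 1 S a b = some s then (1:ℝ) else 0)
      = npQ p S s a := by
  simp only [npStep n S hS a ha han, Fintype.sum_bool, npQ, hs, true_and]
  by_cases h1 : a = s
  · simp [h1]
  by_cases h2 : a = s + 1
  · have : ¬ (a < s) := by omega
    by_cases h3 : a ∈ S <;> simp [h1, this, h3, h2] <;> simp [← h2, h3]
  by_cases h3 : a < s ∧ ∀ t ∈ Finset.Ico a s, t ∈ S
  · have h3' := h3.2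
    simp only [h1, h2, h3.1, h3', false_and, false_or, true_and, if_true, if_false]
    by_cases h4 : a = 1
    · simp [h4]
      split_ifs <;> ring
    by_cases h5 : a - 1 ∈ S
    · simp [h4, h5]
      split_ifs <;> ring
    · simp [h4, h5]
  · have h3' : ∀ Q : Prop, ¬ (a < s ∧ (∀ t ∈ Finset.Ico a s, t ∈ S) ∧ Q) :=
      fun Q h => h3 ⟨h.1, h.2.1⟩
    simp only [h1, h2, h3, h3', false_and, false_or, if_false]
    simp

theorem npW_step (p : ℝ) (n : ℕ) (S : Finset ℕ) (hS : S ⊆ Finset.Icc 1 n)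
    (s : ℕ) (hs : s ∈ Finset.Icc 1 n \ S) :
    ∑ a : Fin n, ∑ b : Bool, (if b then p else 1 - p) *
      (if naplesStep n 1 S (a.1+1) b = some s then (1:ℝ) else 0) = npW p S s := by
  have h : ∀ a : Fin n, ∑ b : Bool, (if b then p else 1 - p) *
      (if naplesStep n 1 S (a.1+1) b = some s then (1:ℝ) else 0) = npQ p S s (a.1+1) :=
    fun a => npQ_step p n S hS _ (by omega) (by omega) s hs
  simp_rw [h]
  rw [Fin.sum_univ_eq_sum_range (fun a => npQ p S s (a+1)) n]
  have e : ∀ N, ∑ a ∈ Finset.Icc 1 N, npQ p S s a = ∑ a ∈ Finset.range N, npQ p S s (a+1) := by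
    intro N
    rw [← Finset.Ico_add_one_right_eq_Icc, Finset.sum_Ico_eq_sum_range]
    simp [add_comm]
  rw [npW, e]
  have hs' := Finset.mem_Icc.1 (Finset.mem_sdiff.1 hs).1
  have z : ∀ a, s + 1 ≤ a → npQ p S s (a+1) = 0 := by
    intro a h
    unfold npQ
    rw [if_neg (by omega), if_neg (by omega), if_neg (by omega)]
  rcases Nat.lt_or_ge s n with hlt | hge
  · symm
    apply Finset.sum_subset
    · intro x; simp only [Finset.mem_range]; omega
    · intro x _ hx
      rw [Finset.mem_range] at hx
      exact z x (by omega)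
  · have : s = n := by omega
    subst this
    rw [Finset.sum_range_succ]
    have : npQ p S s (s+1) = 0 := by
      unfold npQ
      rw [if_neg (by omega), if_pos rfl, if_neg]
      intro hh
      have := Finset.mem_Icc.1 (hS hh)
      omega
    rw [this, add_zero]

theorem npF_rec (p : ℝ) (n k : ℕ) (S : Finset ℕ) (hS : S ⊆ Finset.Icc 1 n) :
    npF p n (k+1) S = ∑ s ∈ Finset.Icc 1 n \ S, npW p S s * npF p n k (insert s S) := by
  rw [npF]
  have h : ∀ (a : Fin n) (b : Bool),
      (naplesStep n 1 S (a.1+1) b).elim 0 (fun s => npF p n k (insert s S)) =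
      ∑ s ∈ Finset.Icc 1 n \ S, (if naplesStep n 1 S (a.1+1) b = some s then (1:ℝ) else 0) *
        npF p n k (insert s S) := by
    intro a b
    rcases h : naplesStep n 1 S (a.1+1) b with _ | s
    · simp
    · have hs := ((npStep n S hS (a.1+1) (by omega) (by omega) b s).1 h).1
      simp only [Option.elim_some, Option.some.injEq, ite_mul, one_mul, zero_mul]
      rw [Finset.sum_ite_eq, if_pos hs]
  simp_rw [h]
  have e : ∀ s ∈ Finset.Icc 1 n \ S, npW p S s * npF p n k (insert s S) =
      ∑ a : Fin n, ∑ b : Bool, ((if b then p else 1 - p) *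
      (if naplesStep n 1 S (a.1+1) b = some s then (1:ℝ) else 0)) * npF p n k (insert s S) := by
    intro s hs
    rw [← npW_step p n S hS s hs, Finset.sum_mul]
    simp_rw [Finset.sum_mul]
  rw [Finset.sum_congr rfl e]
  symm
  rw [Finset.sum_comm]
  apply Finset.sum_congr rfl
  intro a _
  rw [Finset.sum_comm]
  apply Finset.sum_congr rfl
  intro b _
  rw [Finset.mul_sum]
  apply Finset.sum_congr rfl
  intro s _
  ring

theorem npSwap (p : ℝ) (n k j : ℕ) :
    ∑ S ∈ (Finset.Icc 1 n).powersetCard j, npM p S * npF p n (k+1) S =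
    ((j:ℝ)+1) * ∑ S ∈ (Finset.Icc 1 n).powersetCard (j+1), npM p S * npF p n k S := by
  have e1 : ∀ S ∈ (Finset.Icc 1 n).powersetCard j, npM p S * npF p n (k+1) S =
      ∑ s ∈ Finset.Icc 1 n \ S, npM p S * npW p S s * npF p n k (insert s S) := by
    intro S hS
    rw [Finset.mem_powersetCard] at hS
    rw [npF_rec p n k S hS.1, Finset.mul_sum]
    apply Finset.sum_congr rfl
    intro s _
    ring
  have e2 : ∀ S ∈ (Finset.Icc 1 n).powersetCard (j+1), ((j:ℝ)+1) * (npM p S * npF p n k S) =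
      ∑ s ∈ S, npM p (S.erase s) * npW p (S.erase s) s * npF p n k S := by
    intro S hS
    rw [Finset.mem_powersetCard] at hS
    rw [← Finset.sum_mul, ← npM_rec, hS.2]
    push_cast; ring
  rw [Finset.mul_sum, Finset.sum_congr rfl e1, Finset.sum_congr rfl e2, Finset.sum_sigma',
    Finset.sum_sigma']
  refine Finset.sum_bij' (fun x _ => ⟨insert x.2 x.1, x.2⟩) (fun x _ => ⟨x.1.erase x.2, x.2⟩) ?_ ?_ ?_ ?_ ?_
  · rintro ⟨S, s⟩ h
    simp only [Finset.mem_sigma, Finset.mem_powersetCard, Finset.mem_sdiff] at h ⊢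
    refine ⟨⟨Finset.insert_subset h.2.1 h.1.1, ?_⟩, Finset.mem_insert_self _ _⟩
    rw [Finset.card_insert_of_notMem h.2.2, h.1.2]
  · rintro ⟨S, s⟩ h
    simp only [Finset.mem_sigma, Finset.mem_powersetCard, Finset.mem_sdiff] at h ⊢
    refine ⟨⟨(Finset.erase_subset _ _).trans h.1.1, ?_⟩, h.1.1 h.2, Finset.notMem_erase _ _⟩
    rw [Finset.card_erase_of_mem h.2, h.1.2]; rfl
  · rintro ⟨S, s⟩ h
    simp only [Finset.mem_sigma, Finset.mem_powersetCard, Finset.mem_sdiff] at h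
    simp only [Finset.erase_insert h.2.2]
  · rintro ⟨S, s⟩ h
    simp only [Finset.mem_sigma, Finset.mem_powersetCard] at h
    simp only [Finset.insert_erase h.2]
  · rintro ⟨S, s⟩ h
    simp only [Finset.mem_sigma, Finset.mem_powersetCard, Finset.mem_sdiff] at h
    simp only [Finset.erase_insert h.2.2]

theorem npF_M (p : ℝ) (n : ℕ) : npF p n n ∅ = (n.factorial : ℝ) * npM p (Finset.Ico 1 (1+n)) := by
  have h : ∀ j k, j + k = n → npF p n n ∅ =
      (j.factorial : ℝ) * ∑ S ∈ (Finset.Icc 1 n).powersetCard j, npM p S * npF p n k S := by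
    intro j
    induction j with
    | zero => intro k hk; simp at hk; subst hk; simp [npM_empty]
    | succ j ih =>
      intro k hk
      rw [ih (k+1) (by omega), npSwap, Nat.factorial_succ]
      push_cast; ring
  rw [h n 0 rfl]
  have e : (Finset.Icc 1 n).powersetCard n = {Finset.Icc 1 n} := by
    have := Finset.powersetCard_self (Finset.Icc 1 n)
    rwa [Nat.card_Icc, Nat.add_sub_cancel] at this
  have e2 : Finset.Icc 1 n = Finset.Ico 1 (1+n) := by
    ext x; simp only [Finset.mem_Icc, Finset.mem_Ico]; omega
  rw [e, Finset.sum_singleton, npF, mul_one, e2]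

theorem npN_eq (n : ℕ) : (Nnum n : ℝ) = T 1 1 n := by
  unfold Nnum T
  rw [Finset.card_filter]
  push_cast
  apply Finset.sum_congr rfl
  intro α _
  unfold probNaples naplesParks
  rw [Finset.sum_eq_single (fun _ => true)]
  · simp
  · intro b _ hb
    have : ∃ i, b i = false := by
      by_contra hcon
      push Not at hcon
      apply hb
      funext i
      simpa using hcon i
    obtain ⟨i, hi⟩ := this
    rw [Finset.prod_eq_zero (Finset.mem_univ i), zero_mul]
    simp [hi]
  · simp

/-- `P(n) ≤ T(n) ≤ (N(n) + P(n))/2`, where `P(n) = (n+1)^(n-1)` is the number of parking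
functions, `N(n)` the number of 1-Naples parking functions, and `T(n)` the expected number
of random 1-Naples parking functions with `p = 1/2`. -/
theorem stmt15 (n : ℕ) (hn : 1 ≤ n) :
    ((n : ℝ) + 1) ^ (n - 1) ≤ T 1 (1/2) n ∧
    T 1 (1/2) n ≤ ((Nnum n : ℝ) + ((n : ℝ) + 1) ^ (n - 1)) / 2 := by
  have hf : (0:ℝ) < n.factorial := by positivity
  have hP : ((n : ℝ) + 1) ^ (n - 1) = (n.factorial : ℝ) * npRR n := by
    unfold npRR; field_simp
  rw [npN_eq, npT_eq, npT_eq, npF_M, npF_M, hP]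
  constructor
  · exact mul_le_mul_of_nonneg_left (npM_ge _ (by norm_num) n) hf.le
  · have := mul_le_mul_of_nonneg_left (npM_half n) hf.le
    linarith
end
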